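/- arXiv:2110.10244 — 2 statements merged into one kernel-verified Lean document; each statement's English description precedes it below -/
import Mathlib

section
/- Suppose Σ_{i=1}^r q_i q'_i = Σ_{i=1}^r p_i p'_i for quadrics over an algebraically closed field of characteristic ≠ 2, and every combination Σ_i(a_i q_i + a'_i q'_i) with Σ_i a_i a'_i = 0 and (a_●,a'_●) ≠ 0 has slice rank at least (r−1)·2^r + r·2^{r−1} + 1. Then there exists a subspace L of linear forms of dimension at most (r−1)(2^r−1) + r·2^{r−1}, and a linear transformation A of k^{2r} preserving the hyperbolic form Σ x_i y_i, such that, writing φ for the linear map sending the standard basis (e_●, f_●) to (q_●, q'_●), one has p_i ≡ φ(A e_i) and p'_i ≡ φ(A f_i) mod (L) for all i. -/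
/-!
The argument replaces the quadrics by quadratic forms on a vector space `E` and congruence modulo
`m` linear forms by equality on the subspace `cut L` of a set `L` of at most `m` functionals. This
is harmless: projecting to `cut L` shows that a polynomial vanishing on `cut L` lies in the ideal
generated by `L` (`mem_span_lin`).

The main tool is `exists_dual`. If no nontrivial combination of `q 1, …, q s` vanishes on a
subspace of small codimension, there are vectors `z 1, …, z s` with `q i (z j) = δ i j` which are
mutually orthogonal for every `q i`. On the orthogonal of the `z j`, each `x` is corrected by
square roots, `x + ∑ j, t j • z j` with `t j ^ 2 = - q j x`, to a common zero of the `q i`, and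
averaging over the signs of the `t j` shows that a quadratic form `g` vanishing on the common zeros
satisfies `g x = ∑ j, g (z j) * q j x`. So, up to few linear forms, the quadratic forms in the
ideal of the common zeros are the combinations of the `q j`. If a product of two quadratic forms
vanishes there, one of them is such a combination (`factor_mem_span`), and linear relations
`∑ j, q j * m j = 0` come from skew-symmetric matrices (`koszul`).

Write `r = s + 1`. Restricting `∑ i, q i * q' i = ∑ i, p i * p' i` to lines through a point `y`
and reading off the quadratic coefficient gives a linear relation between the two families
(`polarise`): its coefficient vectors are `(q' y, q y)` and `(p' y, p y)`, and it holds modulo the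
polars at `y`, of which one is redundant by the coefficient of degree one. Choosing `s` common
zeros `y` of the `q i` one after the other, each among the zeros of the linear forms already used,
makes the coefficient vectors on each side span a totally isotropic subspace of dimension `s`
(`IsoRich.exists_points`). Extending both to hyperbolic bases (`exists_hyp`) changes the two
decompositions into ones whose first `s` left factors agree. What remains is an identity
`∑ j, q j * m j + Q * Q' - P * P' = 0`. Polarising it once more, at a common zero `y` of the `q j`
where `Q * Q'` does not vanish, gives `Q' y * Q + Q y * Q' = P' y * P + P y * P'` modulo the `q j`.
As `Q y * Q' y = P y * P' y`, this and `Q * Q' = P * P'` yield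
`(Q' y * Q - Q y * Q') ^ 2 = (P' y * P - P y * P') ^ 2`, so that `P`, `P'` are proportional to
`Q`, `Q'` in one of the two orders, and `koszul` determines the cofactors `m j` (`last_pair`). The
resulting change of basis preserves the hyperbolic form (`Hyp.modify`).
-/

open MvPolynomial

/-- `SliceRankLE f r`: the polynomial `f` lies in an ideal generated by `r` linear forms. -/
def SliceRankLE {k : Type*} [Field k] {n : ℕ} (f : MvPolynomial (Fin n) k) (r : ℕ) : Prop :=
  ∃ l : Fin r → MvPolynomial (Fin n) k,
    (∀ i, (l i).IsHomogeneous 1) ∧ f ∈ Ideal.span (Set.range l)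

/-- The slice rank: the minimal number of linear forms whose generated ideal contains `f`. -/
noncomputable def srk {k : Type*} [Field k] {n : ℕ} (f : MvPolynomial (Fin n) k) : ℕ :=
  sInf {r | SliceRankLE f r}

/-- The symmetric matrix associated to a quadratic form (characteristic ≠ 2). -/
noncomputable def assocMatrix {k : Type*} [Field k] {n : ℕ} (q : MvPolynomial (Fin n) k) :
    Matrix (Fin n) (Fin n) k :=
  fun i j => if i = j then q.coeff (Finsupp.single i 2)
  else (2 : k)⁻¹ * q.coeff (Finsupp.single i 1 + Finsupp.single j 1)

/-- The rank of a quadratic form: the rank of its associated symmetric matrix. -/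
noncomputable def qrank {k : Type*} [Field k] {n : ℕ} (q : MvPolynomial (Fin n) k) : ℕ :=
  (assocMatrix q).rank

/-- The hyperbolic quadratic form `∑ xᵢyᵢ` on `k^{2r} = (Fin r ⊕ Fin r → k)`. -/
def hypForm {k : Type*} [Field k] {r : ℕ} (v : Fin r ⊕ Fin r → k) : k :=
  ∑ i, v (Sum.inl i) * v (Sum.inr i)

/-- The linear map `k^{2r} →` quadrics sending the standard basis `(e, f)` to `(q, q')`. -/
noncomputable def phiMap {k : Type*} [Field k] {n r : ℕ}
    (q q' : Fin r → MvPolynomial (Fin n) k) (w : Fin r ⊕ Fin r → k) :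
    MvPolynomial (Fin n) k :=
  ∑ j, w (Sum.inl j) • q j + ∑ j, w (Sum.inr j) • q' j

namespace QuadDecomp

open Module

/-! ### Linear subspaces cut out by linear forms -/

section Duality

open QuadraticMap
open scoped Classical

variable {k : Type*} [Field k] {E : Type*} [AddCommGroup E] [Module k E]

/-- The linear subspace cut out by a finite set `L` of linear forms. -/
noncomputable def cut (L : Finset (Dual k E)) : Submodule k E := ⨅ l ∈ L, LinearMap.ker l

theorem mem_cut {L : Finset (Dual k E)} {x : E} : x ∈ cut L ↔ ∀ l ∈ L, l x = 0 := by
  simp [cut]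

theorem mem_cut_union {L L' : Finset (Dual k E)} {x : E} :
    x ∈ cut (L ∪ L') ↔ x ∈ cut L ∧ x ∈ cut L' := by
  simp only [mem_cut, Finset.mem_union]
  constructor
  · intro h; exact ⟨fun l hl => h l (Or.inl hl), fun l hl => h l (Or.inr hl)⟩
  · rintro ⟨h, h2⟩ l (hl | hl)
    exacts [h l hl, h2 l hl]

/-! ### Dual systems of quadratic forms -/

/-- The vectors `z j` are dual to the quadratic forms `q i` and mutually orthogonal for each
of them: `q i (z j) = δ i j`, and the `q i`-polar of `z j`, `z l` is zero for `j ≠ l`. -/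
structure Dualizes {s : ℕ} (q : Fin s → QuadraticForm k E) (z : Fin s → E) : Prop where
  diag : ∀ i j, q i (z j) = if i = j then 1 else 0
  off : ∀ i j l, j ≠ l → polar (q i) (z j) (z l) = 0

/-- The linear forms `x ↦ polar (q i) (z j) x`. -/
noncomputable def orth {s t : ℕ} (q : Fin s → QuadraticForm k E) (z : Fin t → E) :
    Finset (Dual k E) :=
  Finset.univ.image fun ij : Fin s × Fin t => (q ij.1).polarBilin (z ij.2)

theorem card_orth {s t : ℕ} (q : Fin s → QuadraticForm k E) (z : Fin t → E) :
    (orth q z).card ≤ s * t := by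
  refine Finset.card_image_le.trans ?_
  simp

theorem mem_cut_orth {s t : ℕ} {q : Fin s → QuadraticForm k E} {z : Fin t → E} {x : E} :
    x ∈ cut (orth q z) ↔ ∀ i j, polar (q i) (z j) x = 0 := by
  simp only [mem_cut, orth, Finset.mem_image, Finset.mem_univ, true_and]
  constructor
  · intro h i j
    simpa using h _ ⟨(i, j), rfl⟩
  · rintro h _ ⟨⟨i, j⟩, rfl⟩
    simpa using h i j

/-! ### Restriction to lines -/

theorem map_add_smul (q : QuadraticForm k E) (x y : E) (t : k) :
    q (x + t • y) = q x + t * polar q x y + t ^ 2 * q y := by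
  rw [QuadraticMap.map_add (⇑q), QuadraticMap.polar_smul_right, QuadraticMap.map_smul]
  simp only [smul_eq_mul]; ring

/-- A polynomial function of degree at most four that vanishes identically on an infinite field
has zero coefficients. -/
theorem quartic_coeffs [Infinite k] {c0 c1 c2 c3 c4 : k}
    (h : ∀ t : k, c0 + c1 * t + c2 * t ^ 2 + c3 * t ^ 3 + c4 * t ^ 4 = 0) :
    c0 = 0 ∧ c1 = 0 ∧ c2 = 0 ∧ c3 = 0 ∧ c4 = 0 := by
  have hp : (Polynomial.C c0 + Polynomial.C c1 * Polynomial.X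
      + Polynomial.C c2 * Polynomial.X ^ 2
      + Polynomial.C c3 * Polynomial.X ^ 3 + Polynomial.C c4 * Polynomial.X ^ 4
      : Polynomial k) = 0 := by
    apply Polynomial.funext
    intro t
    simpa using h t
  refine ⟨?_, ?_, ?_, ?_, ?_⟩
  · simpa [Polynomial.coeff_X, Polynomial.coeff_C] using congrArg (fun p => Polynomial.coeff p 0) hp
  · simpa [Polynomial.coeff_X, Polynomial.coeff_C, Polynomial.coeff_X_pow]
      using congrArg (fun p => Polynomial.coeff p 1) hp
  · simpa [Polynomial.coeff_X, Polynomial.coeff_C, Polynomial.coeff_X_pow]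
      using congrArg (fun p => Polynomial.coeff p 2) hp
  · simpa [Polynomial.coeff_X, Polynomial.coeff_C, Polynomial.coeff_X_pow]
      using congrArg (fun p => Polynomial.coeff p 3) hp
  · simpa [Polynomial.coeff_X, Polynomial.coeff_C, Polynomial.coeff_X_pow]
      using congrArg (fun p => Polynomial.coeff p 4) hp

/-- If `∑ i, f i * g i` vanishes on the line `y + t x`, then so do its coefficients at
`t ^ 0`, `t ^ 1`, `t ^ 2` and `t ^ 4`. -/
theorem line_coeffs [Infinite k] {ι : Type*} [Fintype ι] (f g : ι → QuadraticForm k E)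
    (x y : E) (h : ∀ t : k, ∑ i, f i (y + t • x) * g i (y + t • x) = 0) :
    ∑ i, f i y * g i y = 0 ∧
    ∑ i, (f i y * polar (g i) y x + g i y * polar (f i) y x) = 0 ∧
    ∑ i, (f i y * g i x + f i x * g i y + polar (f i) y x * polar (g i) y x) = 0 ∧
    ∑ i, f i x * g i x = 0 := by
  have := quartic_coeffs (c0 := ∑ i, f i y * g i y)
    (c1 := ∑ i, (f i y * polar (g i) y x + g i y * polar (f i) y x))
    (c2 := ∑ i, (f i y * g i x + f i x * g i y + polar (f i) y x * polar (g i) y x))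
    (c3 := ∑ i, (f i x * polar (g i) y x + g i x * polar (f i) y x))
    (c4 := ∑ i, f i x * g i x) (by
      intro t
      rw [← h t]
      simp only [Finset.sum_mul, ← Finset.sum_add_distrib]
      refine Finset.sum_congr rfl fun i _ => ?_
      rw [map_add_smul, map_add_smul]; ring)
  exact ⟨this.1, this.2.1, this.2.2.1, this.2.2.2.2⟩

theorem line_coeffs_one [Infinite k] (f g : QuadraticForm k E)
    (x y : E) (h : ∀ t : k, f (y + t • x) * g (y + t • x) = 0) :
    f y * g y = 0 ∧ f y * polar g y x + g y * polar f y x = 0 ∧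
    f y * g x + f x * g y + polar f y x * polar g y x = 0 ∧ f x * g x = 0 := by
  simpa using line_coeffs (ι := Unit) (fun _ => f) (fun _ => g) x y (by simpa using h)

/-- If `f * g` vanishes on a line through a point where `g ≠ 0`, then `f` vanishes in the
direction of that line. -/
theorem eq_zero_of_mul_line [Infinite k] (f g : QuadraticForm k E)
    (x y : E) (h : ∀ t : k, f (y + t • x) * g (y + t • x) = 0) (hg : g y ≠ 0) : f x = 0 := by
  obtain ⟨h0, h1, h2, -⟩ := line_coeffs_one f g x y h
  have hf : f y = 0 := by simpa [hg] using h0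
  have hp : polar f y x = 0 := by simpa [hf, hg] using h1
  simpa [hf, hp, hg] using h2

theorem polar_sum_right {ι : Type*} (q : QuadraticForm k E) (y : E) (S : Finset ι) (t : ι → k)
    (z : ι → E) : polar q y (∑ j ∈ S, t j • z j) = ∑ j ∈ S, t j * polar q y (z j) := by
  have : q.polarBilin y (∑ j ∈ S, t j • z j) = ∑ j ∈ S, t j * q.polarBilin y (z j) := by
    rw [map_sum]; simp only [map_smul, smul_eq_mul]
  exact this

theorem map_add_sum {ι : Type*} (q : QuadraticForm k E) (z : ι → E) (t : ι → k) (x : E)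
    (hx : ∀ j, polar q (z j) x = 0) (hz : ∀ j l, j ≠ l → polar q (z j) (z l) = 0)
    (S : Finset ι) :
    q (x + ∑ j ∈ S, t j • z j) = q x + ∑ j ∈ S, t j ^ 2 * q (z j) := by
  induction S using Finset.induction_on with
  | empty => simp
  | insert a S ha ih =>
    rw [Finset.sum_insert ha, Finset.sum_insert ha, add_comm (t a • z a), ← add_assoc,
      map_add_smul, ih]
    have : polar q (x + ∑ j ∈ S, t j • z j) (z a) = 0 := by
      rw [QuadraticMap.polar_comm, QuadraticMap.polar_add_right, hx a, polar_sum_right, zero_add]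
      refine Finset.sum_eq_zero fun j hj => ?_
      rw [hz a j (by rintro rfl; exact ha hj), mul_zero]
    rw [this]; ring

/-! ### Common zeros of a family with a dual system -/

/-- Averaging over the signs of the square roots `t j` of `c j` removes all terms of odd degree
in any `t j`. -/
theorem sign_average {ι : Type*} (h2 : (2 : k) ≠ 0) (g : QuadraticForm k E) (z : ι → E)
    (c : ι → k) (S : Finset ι) :
    ∀ (x : E) (K : k), (∃ t : ι → k, ∀ j, t j ^ 2 = c j) →
      (∀ t : ι → k, (∀ j, t j ^ 2 = c j) → g (x + ∑ j ∈ S, t j • z j) = K) →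
      g x + ∑ j ∈ S, c j * g (z j) = K := by
  induction S using Finset.induction_on with
  | empty =>
    rintro x K ⟨t, ht⟩ h
    simpa using h t ht
  | insert a S ha ih =>
    intro x K hex h
    have key := ih x (K - c a * g (z a)) hex (by
      intro t ht
      set u := x + ∑ j ∈ S, t j • z j with hu
      have h1 := h t ht
      have h3 := h (Function.update t a (- t a)) (by
        intro j
        by_cases hj : j = a
        · subst hj; simp [ht]
        · simp [hj, ht])
      have e : ∑ j ∈ S, (Function.update t a (- t a)) j • z j = ∑ j ∈ S, t j • z j :=
        Finset.sum_congr rfl fun j hj => by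
          rw [Function.update_of_ne]; rintro rfl; exact ha hj
      rw [Finset.sum_insert ha, add_comm (_ • z a), ← add_assoc] at h1 h3
      rw [e, ← hu, map_add_smul] at h3
      rw [← hu, map_add_smul] at h1
      rw [Function.update_self] at h3
      have h4 : (2 : k) * (g u + t a ^ 2 * g (z a) - K) = 0 := by linear_combination h1 + h3
      rw [ht a] at h4
      have := (mul_eq_zero.1 h4).resolve_left h2
      linear_combination this)
    rw [Finset.sum_insert ha]
    linear_combination key

/-- Given dual vectors `z j`, a vector `x` orthogonal to all of them can be corrected by a
combination of the `z j` to a common zero of the `q i`. -/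
theorem Dualizes.param {s : ℕ} {q : Fin s → QuadraticForm k E} {z : Fin s → E}
    (hz : Dualizes q z) {x : E} (hx : ∀ i j, polar (q i) (z j) x = 0) (t : Fin s → k)
    (ht : ∀ j, t j ^ 2 = - q j x) (i : Fin s) : q i (x + ∑ j, t j • z j) = 0 := by
  rw [map_add_sum (q i) z t x (hx i) (hz.off i)]
  simp [hz.diag, ht]

variable [IsAlgClosed k]

theorem exists_sqrt {ι : Type*} (c : ι → k) : ∃ t : ι → k, ∀ j, t j ^ 2 = c j := by
  choose t ht using fun j => IsAlgClosed.exists_pow_nat_eq (c j) (n := 2) (by norm_num)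
  exact ⟨t, ht⟩

/-- A quadratic form vanishing at all the corrected vectors `x + ∑ j, t j • z j` is at `x` a
combination of the `q j`. -/
theorem eq_sum_of_param (h2 : (2 : k) ≠ 0) {s : ℕ} (q : Fin s → QuadraticForm k E)
    (z : Fin s → E) (g : QuadraticForm k E) (x : E)
    (h : ∀ t : Fin s → k, (∀ j, t j ^ 2 = - q j x) → g (x + ∑ j, t j • z j) = 0) :
    g x = ∑ j, g (z j) * q j x := by
  have := sign_average h2 g z (fun j => - q j x) Finset.univ x 0 (exists_sqrt _) h
  simp only [neg_mul, Finset.sum_neg_distrib] at this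
  rw [← sub_eq_add_neg, sub_eq_zero] at this
  rw [this]
  exact Finset.sum_congr rfl fun j _ => mul_comm _ _

/-- A quadratic form that vanishes on the common zeros of the `q j` in a subspace is a
combination of the `q j` on the orthogonal of a dual system in that subspace. -/
theorem Dualizes.eq_sum (h2 : (2 : k) ≠ 0) {s : ℕ} {q : Fin s → QuadraticForm k E}
    {z : Fin s → E} (hz : Dualizes q z) {L : Finset (Dual k E)} (hzL : ∀ j, z j ∈ cut L)
    (g : QuadraticForm k E) (hg : ∀ x ∈ cut L, (∀ i, q i x = 0) → g x = 0)
    {x : E} (hx : x ∈ cut (L ∪ orth q z)) : g x = ∑ j, g (z j) * q j x := by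
  rw [mem_cut_union, mem_cut_orth] at hx
  refine eq_sum_of_param h2 q z g x fun t ht => hg _ ?_ (hz.param hx.2 t ht)
  exact add_mem hx.1 (Submodule.sum_mem _ fun j _ => Submodule.smul_mem _ _ (hzL j))

/-- No nontrivial combination of the `q i` vanishes after imposing `m` further linear equations
on the subspace `cut L`. -/
def Rich {s : ℕ} (q : Fin s → QuadraticForm k E) (L : Finset (Dual k E)) (m : ℕ) : Prop :=
  ∀ c : Fin s → k, c ≠ 0 → ∀ L' : Finset (Dual k E), L'.card ≤ m →
    ∃ x ∈ cut (L ∪ L'), ∑ i, c i * q i x ≠ 0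

omit [IsAlgClosed k] in
theorem Rich.union {s : ℕ} {q : Fin s → QuadraticForm k E} {L L' : Finset (Dual k E)}
    {m m' : ℕ} (h : Rich q L m) (hc : L'.card + m' ≤ m) : Rich q (L ∪ L') m' := by
  intro c hc0 L'' hL''
  rw [Finset.union_assoc]
  exact h c hc0 _ ((Finset.card_union_le _ _).trans (by omega))

/-- The number of linear equations that must be affordable for a dual system of `s` quadratic
forms to exist. -/
def bd : ℕ → ℕ
  | 0 => 0
  | s + 1 => bd s + (s ^ 2 + s + 1)

theorem sq_le_bd (s : ℕ) : s ^ 2 ≤ bd s := by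
  induction s with
  | zero => simp [bd]
  | succ s ih =>
    rw [bd]
    rcases Nat.eq_zero_or_pos s with rfl | hs
    · simp
    · nlinarith

omit [IsAlgClosed k] in
theorem Rich.succAbove {s : ℕ} {q : Fin (s + 1) → QuadraticForm k E} {L : Finset (Dual k E)}
    {m : ℕ} (h : Rich q L m) (a : Fin (s + 1)) : Rich (fun i => q (a.succAbove i)) L m := by
  intro c hc L' hL'
  obtain ⟨x, hx, hne⟩ := h (a.insertNth 0 c) (by
    intro h0; apply hc; ext i
    simpa using congrFun h0 (a.succAbove i)) L' hL'
  refine ⟨x, hx, ?_⟩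
  simpa [Fin.sum_univ_succAbove _ a] using hne

/-- Dual systems exist for rich families. The vectors are found one at a time: by the case of one
form fewer, a form `q a` vanishing on the common zeros of the others would be a combination of
them on a subspace of small codimension. -/
theorem exists_dual (h2 : (2 : k) ≠ 0) : ∀ (s : ℕ) (q : Fin s → QuadraticForm k E)
    (L : Finset (Dual k E)), Rich q L (bd s) → ∃ z, Dualizes q z ∧ ∀ j, z j ∈ cut L := by
  intro s
  induction s with
  | zero => exact fun q L _ => ⟨fun _ => 0, ⟨fun i => i.elim0, fun i => i.elim0⟩, fun i => i.elim0⟩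
  | succ s ih =>
    intro q L h
    have hb := sq_le_bd s
    -- Dual vectors for the indices in `S`, and zero elsewhere.
    have claim : ∀ S : Finset (Fin (s + 1)), ∃ z : Fin (s + 1) → E, (∀ j, z j ∈ cut L) ∧
        (∀ i j, q i (z j) = if i = j ∧ j ∈ S then 1 else 0) ∧
        (∀ i j l, j ≠ l → polar (q i) (z j) (z l) = 0) ∧ ∀ j ∉ S, z j = 0 := by
      intro S
      induction S using Finset.induction_on with
      | empty => exact ⟨fun _ => 0, by simp⟩
      | insert a S ha IH =>
        obtain ⟨z, hzL, hz1, hz2, hz3⟩ := IH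
        set T : Finset (Dual k E) := (Finset.univ ×ˢ S).image
          fun ij : Fin (s + 1) × Fin (s + 1) => (q ij.1).polarBilin (z ij.2) with hT
        have hS : S.card ≤ s := by
          have : S.card < (Finset.univ : Finset (Fin (s + 1))).card :=
            Finset.card_lt_card (Finset.ssubset_univ_iff.2 (by rintro rfl; simp at ha))
          simpa [Nat.lt_succ_iff] using this
        have hTc : T.card ≤ s ^ 2 + s := by
          refine Finset.card_image_le.trans ?_
          rw [Finset.card_product, Finset.card_univ, Fintype.card_fin]
          nlinarith
        have hT' : ∀ x ∈ cut T, ∀ i j, polar (q i) (z j) x = 0 := by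
          intro x hx i j
          by_cases hj : j ∈ S
          · have := mem_cut.1 hx ((q i).polarBilin (z j))
              (Finset.mem_image.2 ⟨(i, j), by simp [hj], rfl⟩)
            simpa using this
          · rw [hz3 j hj, QuadraticMap.polar_zero_left]
        obtain ⟨w, hw, hwL⟩ := ih (fun i => q (a.succAbove i)) (L ∪ T)
          ((h.union (m' := bd s) (by rw [bd]; omega)).succAbove a)
        obtain ⟨y, hyL, hy0, hya⟩ : ∃ y ∈ cut (L ∪ T), (∀ i, q (a.succAbove i) y = 0) ∧
            q a y ≠ 0 := by
          by_contra! hcon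
          obtain ⟨x, hx, hne⟩ := h (a.insertNth 1 fun i => - q a (w i))
            (fun h0 => by simpa using congrFun h0 a)
            (T ∪ orth (fun i => q (a.succAbove i)) w) (by
              refine (Finset.card_union_le _ _).trans ?_
              have := card_orth (fun i => q (a.succAbove i)) w
              rw [bd]; nlinarith)
          rw [← Finset.union_assoc] at hx
          have := hw.eq_sum h2 hwL (q a) hcon hx
          apply hne
          simp [Fin.sum_univ_succAbove _ a, this]
        rw [mem_cut_union] at hyL
        obtain ⟨u, hu⟩ := IsAlgClosed.exists_pow_nat_eq (q a y)⁻¹ (n := 2) (by norm_num)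
        have hort : ∀ i j, polar (q i) (z j) (u • y) = 0 := by
          intro i j
          rw [QuadraticMap.polar_smul_right, hT' y hyL.2, smul_zero]
        refine ⟨Function.update z a (u • y), ?_, ?_, ?_, ?_⟩
        · intro j
          by_cases hj : j = a
          · subst hj; simpa using Submodule.smul_mem _ _ hyL.1
          · simpa [hj] using hzL j
        · intro i j
          by_cases hj : j = a
          · subst hj
            rw [Function.update_self, QuadraticMap.map_smul]
            rcases Fin.eq_self_or_eq_succAbove j i with rfl | ⟨i', rfl⟩
            · rw [← _root_.sq, hu]; simp [hya]
            · simp [hy0]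
          · rw [Function.update_of_ne hj, hz1]
            simp [hj]
        · intro i j l hjl
          by_cases hj : j = a
          · subst hj
            rw [Function.update_self, Function.update_of_ne hjl.symm, QuadraticMap.polar_comm,
              hort]
          · by_cases hl : l = a
            · subst hl
              rw [Function.update_self, Function.update_of_ne hj, hort]
            · rw [Function.update_of_ne hl, Function.update_of_ne hj, hz2 i j l hjl]
        · intro j hj
          rw [Finset.mem_insert, not_or] at hj
          rw [Function.update_of_ne hj.1, hz3 j hj.2]
    obtain ⟨z, hzL, hz1, hz2, -⟩ := claim Finset.univ
    exact ⟨z, ⟨by simpa using hz1, hz2⟩, hzL⟩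

/-! ### Products and linear relations modulo few linear forms -/

/-- If a product of two quadratic forms vanishes on the common zeros of a rich family `q`, then
one of the factors is a combination of the `q j` on a subspace of small codimension. -/
theorem factor_mem_span (h2 : (2 : k) ≠ 0) {s : ℕ} (q : Fin s → QuadraticForm k E)
    (L : Finset (Dual k E)) (h : Rich q L (bd s + s)) (f g : QuadraticForm k E)
    (hfg : ∀ x ∈ cut L, (∀ i, q i x = 0) → f x * g x = 0) :
    ∃ L' : Finset (Dual k E), L'.card ≤ s ^ 2 + s ∧ ∃ d : Fin s → k,
      (∀ x ∈ cut (L ∪ L'), f x = ∑ j, d j * q j x) ∨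
      (∀ x ∈ cut (L ∪ L'), g x = ∑ j, d j * q j x) := by
  have hinf : Infinite k := IsAlgClosed.instInfinite
  by_cases hc : ∃ y ∈ cut L, (∀ i, q i y = 0) ∧ g y ≠ 0
  · obtain ⟨y, hyL, hyq, hyg⟩ := hc
    set T := orth q (fun _ : Fin 1 => y) with hT
    have hTc : T.card ≤ s := by simpa using card_orth q (fun _ : Fin 1 => y)
    obtain ⟨z, hz, hzL⟩ := exists_dual h2 s q (L ∪ T) (h.union (by omega))
    refine ⟨T ∪ orth q z, ?_, fun j => f (z j), Or.inl fun x hx => ?_⟩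
    · have := card_orth q z
      refine (Finset.card_union_le _ _).trans ?_
      nlinarith
    · rw [← Finset.union_assoc, mem_cut_union, mem_cut_orth] at hx
      -- The line through `y` in the direction of a corrected vector lies in the common zeros.
      refine eq_sum_of_param h2 q z f x fun t ht => ?_
      have hu : x + ∑ j, t j • z j ∈ cut (L ∪ T) :=
        add_mem hx.1 (Submodule.sum_mem _ fun j _ => Submodule.smul_mem _ _ (hzL j))
      rw [mem_cut_union, hT, mem_cut_orth] at hu
      refine eq_zero_of_mul_line f g _ y (fun τ => hfg _ ?_ fun i => ?_) hyg
      · exact add_mem hyL (Submodule.smul_mem _ _ hu.1)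
      · rw [map_add_smul, hyq, hu.2 i 0, hz.param hx.2 t ht]; simp
  · push Not at hc
    obtain ⟨z, hz, hzL⟩ := exists_dual h2 s q L (by simpa using h.union (L' := ∅) (by simp))
    refine ⟨orth q z, ?_, fun j => g (z j), Or.inr fun x hx => hz.eq_sum h2 hzL g hc hx⟩
    have := card_orth q z
    nlinarith

/-- Koszul relations: if `∑ j, q j * m j` vanishes on `cut L`, then up to few linear forms the
`m j` are skew-symmetric combinations of the `q j`. At most one form costs nothing. -/
theorem koszul (h2 : (2 : k) ≠ 0) {s : ℕ} (q m : Fin s → QuadraticForm k E)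
    (L : Finset (Dual k E)) (h : Rich q L (bd s))
    (hqm : ∀ x ∈ cut L, ∑ j, q j x * m j x = 0) :
    ∃ L' : Finset (Dual k E), L'.card ≤ (if s ≤ 1 then 0 else s ^ 2) ∧
      ∃ S : Fin s → Fin s → k, (∀ i j, S i j = - S j i) ∧
        ∀ x ∈ cut (L ∪ L'), ∀ j, m j x = ∑ l, S j l * q l x := by
  have hinf : Infinite k := IsAlgClosed.instInfinite
  by_cases hs : s ≤ 1
  · refine ⟨∅, by simp, fun _ _ => 0, by simp, ?_⟩
    intro x hx j
    rw [Finset.union_empty] at hx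
    obtain rfl : s = 1 := le_antisymm hs j.pos
    obtain ⟨y, hy, hne⟩ := h (fun _ => 1) (fun h0 => one_ne_zero (congrFun h0 0)) ∅ (by simp)
    rw [Finset.union_empty] at hy
    fin_cases j
    simp only [zero_mul, Finset.sum_const_zero]
    refine eq_zero_of_mul_line (m 0) (q 0) x y (fun t => ?_) (by simpa using hne)
    simpa [mul_comm] using hqm _ (add_mem hy (Submodule.smul_mem _ t hx))
  · obtain ⟨z, hz, hzL⟩ := exists_dual h2 s q L h
    refine ⟨orth q z, ?_, fun j l => - m l (z j), ?_, ?_⟩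
    · rw [if_neg hs]; have := card_orth q z; nlinarith
    · intro i j
      have := (line_coeffs q m (z j) (z i) fun t =>
        hqm _ (add_mem (hzL i) (Submodule.smul_mem _ t (hzL j)))).2.2.1
      by_cases hij : i = j
      · subst hij
        have h0 := (line_coeffs q m (z i) (z i) fun t =>
          hqm _ (add_mem (hzL i) (Submodule.smul_mem _ t (hzL i)))).1
        simp [hz.diag] at h0
        simp [h0]
      · simp [hz.diag, hz.off _ _ _ hij, Finset.sum_add_distrib] at this
        linear_combination -this
    · intro x hx j
      rw [mem_cut_union, mem_cut_orth] at hx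
      have := (line_coeffs q m x (z j) fun t =>
        hqm _ (add_mem (hzL j) (Submodule.smul_mem _ t hx.1))).2.2.1
      simp [hz.diag, hx.2, Finset.sum_add_distrib] at this
      simp only [neg_mul, Finset.sum_neg_distrib]
      rw [eq_neg_iff_add_eq_zero, ← this]
      congr 1
      exact Finset.sum_congr rfl fun l _ => mul_comm _ _

/-! ### Polarisation -/

omit [IsAlgClosed k] in
/-- Polarising an identity `∑ i, f i * g i = 0` at a point `y`. The polars at `y` of the forms
are linear forms satisfying one linear relation, given by an isotropic vector; this is why the
quadratic form `∑ i, polar (f i) y x * polar (g i) y x` vanishes after imposing only one linear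
equation fewer than there are products. -/
theorem polarise [Infinite k] {ι : Type*} [Fintype ι] (f g : ι → QuadraticForm k E)
    (L : Finset (Dual k E)) (hfg : ∀ x ∈ cut L, ∑ i, f i x * g i x = 0) {y : E} (hy : y ∈ cut L)
    (hne : ∃ i, f i y ≠ 0 ∨ g i y ≠ 0) :
    ∃ L' : Finset (Dual k E), L'.card + 1 ≤ Fintype.card ι ∧
      ∀ x ∈ cut (L ∪ L'), ∑ i, (f i y * g i x + g i y * f i x) = 0 := by
  obtain ⟨a, ha⟩ := hne
  wlog hfa : f a y ≠ 0 generalizing f g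
  · obtain ⟨L', h1, h3⟩ := this g f (by simpa only [mul_comm] using hfg) ha.symm
      (ha.resolve_left hfa)
    exact ⟨L', h1, fun x hx => by simpa only [add_comm] using h3 x hx⟩
  refine ⟨(Finset.univ.erase a).image fun i => (g i).polarBilin y
    - (g i y / f a y) • (f a).polarBilin y, ?_, fun x hx => ?_⟩
  · have h1 : 1 ≤ Fintype.card ι := Fintype.card_pos_iff.2 ⟨a⟩
    have := Finset.card_image_le (s := Finset.univ.erase a) (f := fun i => (g i).polarBilin y
      - (g i y / f a y) • (f a).polarBilin y)
    rw [Finset.card_erase_of_mem (Finset.mem_univ a), Finset.card_univ] at this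
    omega
  · rw [mem_cut_union] at hx
    obtain ⟨hxL, hx⟩ := hx
    have hrel : ∀ i, i ≠ a → polar (g i) y x = g i y / f a y * polar (f a) y x := by
      intro i hi
      have := mem_cut.1 hx _ (Finset.mem_image_of_mem _ (Finset.mem_erase.2 ⟨hi, Finset.mem_univ i⟩))
      simpa [sub_eq_zero] using this
    obtain ⟨c0, c1, c2, -⟩ := line_coeffs f g x y fun t =>
      hfg _ (add_mem hy (Submodule.smul_mem _ t hxL))
    rw [← Finset.add_sum_erase _ _ (Finset.mem_univ a)] at c0 c1
    have e : ∑ i, polar (f i) y x * polar (g i) y x = 0 := by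
      rw [← Finset.add_sum_erase _ _ (Finset.mem_univ a)]
      have e1 : ∑ i ∈ Finset.univ.erase a, polar (f i) y x * polar (g i) y x =
          (polar (f a) y x / f a y) * ∑ i ∈ Finset.univ.erase a, g i y * polar (f i) y x := by
        rw [Finset.mul_sum]
        refine Finset.sum_congr rfl fun i hi => ?_
        rw [hrel i (Finset.ne_of_mem_erase hi)]; ring
      have e2 : ∑ i ∈ Finset.univ.erase a, f i y * polar (g i) y x =
          (polar (f a) y x / f a y) * ∑ i ∈ Finset.univ.erase a, f i y * g i y := by
        rw [Finset.mul_sum]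
        refine Finset.sum_congr rfl fun i hi => ?_
        rw [hrel i (Finset.ne_of_mem_erase hi)]; ring
      rw [Finset.sum_add_distrib, e2] at c1
      rw [e1]
      generalize ∑ i ∈ Finset.univ.erase a, g i y * polar (f i) y x = A at *
      generalize ∑ i ∈ Finset.univ.erase a, f i y * g i y = B at *
      have hB : B = -(f a y * g a y) := by linear_combination c0
      have hA : f a y * polar (g a) y x + A = 0 := by
        rw [hB] at c1
        have : polar (f a) y x / f a y * -(f a y * g a y) = -(polar (f a) y x * g a y) := by
          field_simp
        linear_combination c1 - this
      have : polar (f a) y x * polar (g a) y x + polar (f a) y x / f a y * A =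
          polar (f a) y x / f a y * (f a y * polar (g a) y x + A) := by field_simp
      rw [this, hA, mul_zero]
    rw [Finset.sum_add_distrib, e, add_zero] at c2
    rw [← c2]
    exact Finset.sum_congr rfl fun i _ => by ring

/-! ### The last pair of factors -/

/-- If two decompositions differ only in the cofactors of the `q j` and in one product `Q * Q'`
or `P * P'` whose factors agree up to scalars modulo the `q j`, the cofactors are determined up to
a Koszul relation. -/
theorem cofactors (h2 : (2 : k) ≠ 0) {s : ℕ} (q m : Fin s → QuadraticForm k E)
    (Q Q' P P' : QuadraticForm k E) (L : Finset (Dual k E)) (h : Rich q L (bd s))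
    (hid : ∀ x ∈ cut L, ∑ j, q j x * m j x + Q x * Q' x - P x * P' x = 0)
    (c : k) (hc : c ≠ 0) (α β : Fin s → k)
    (hP : ∀ x ∈ cut L, P x = c * Q x + ∑ j, α j * q j x)
    (hP' : ∀ x ∈ cut L, P' x = c⁻¹ * Q' x + ∑ j, β j * q j x) :
    ∃ L' : Finset (Dual k E), L'.card ≤ (if s ≤ 1 then 0 else s ^ 2) ∧
      ∃ S : Fin s → Fin s → k, (∀ i j, S i j = - S j i) ∧
        ∀ x ∈ cut (L ∪ L'), ∀ j, m j x =
          c * β j * Q x + c⁻¹ * α j * Q' x + ∑ l, (α j * β l + S j l) * q l x := by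
  obtain ⟨L', hL', S, hS, hm⟩ := koszul h2 q
    (fun j => m j - (c * β j) • Q - (c⁻¹ * α j) • Q' - α j • ∑ l, β l • q l) L h (by
      intro x hx
      have := hid x hx
      rw [hP x hx, hP' x hx] at this
      simp only [_root_.sub_apply, _root_.smul_apply, _root_.sum_apply,
        smul_eq_mul]
      have e : ∑ j, q j x * (m j x - c * β j * Q x - c⁻¹ * α j * Q' x
          - α j * ∑ l, β l * q l x) =
          ∑ j, q j x * m j x - c * Q x * ∑ j, β j * q j x - c⁻¹ * Q' x * ∑ j, α j * q j x
            - (∑ j, α j * q j x) * ∑ l, β l * q l x := by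
        rw [Finset.sum_mul, Finset.mul_sum, Finset.mul_sum]
        simp only [← Finset.sum_sub_distrib]
        exact Finset.sum_congr rfl fun j _ => by ring
      rw [e, ← this]
      linear_combination (Q x * Q' x) * mul_inv_cancel₀ hc)
  refine ⟨L', hL', S, hS, fun x hx j => ?_⟩
  have := hm x hx j
  simp only [_root_.sub_apply, _root_.smul_apply, _root_.sum_apply,
        smul_eq_mul] at this
  simp only [add_mul, Finset.sum_add_distrib, mul_assoc (α j), ← Finset.mul_sum]
  linear_combination this

/-- The last step: two decompositions that differ only in the cofactors `m j` of the `q j` and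
in one product `Q * Q' = P * P'`. Polarising at a common zero of the `q j` and comparing
`(a Q + a' Q')² - 4 a a' Q Q'` with its counterpart for `P`, `P'` shows that a product of two
quadratic forms vanishes on the common zeros of the `q j`; hence `P`, `P'` are proportional to
`Q`, `Q'` or to `Q'`, `Q` modulo the `q j`. -/
theorem last_pair (h2 : (2 : k) ≠ 0) {s N : ℕ} (q m : Fin s → QuadraticForm k E)
    (Q Q' P P' : QuadraticForm k E) (L : Finset (Dual k E)) (hL : L.card ≤ s * (2 * s + 1))
    (hN : 3 * s ^ 2 + 3 * s + 1 + bd s ≤ N)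
    (hid : ∀ x ∈ cut L, ∑ j, q j x * m j x + Q x * Q' x - P x * P' x = 0)
    (hH : ∀ (c : Fin s → k) (d d' : k), ¬ (c = 0 ∧ d = 0 ∧ d' = 0) → d * d' = 0 →
      ∀ L' : Finset (Dual k E), L'.card ≤ N →
        ∃ x ∈ cut L', ∑ j, c j * q j x + d * Q x + d' * Q' x ≠ 0) :
    ∃ L' : Finset (Dual k E),
      (L ∪ L').card ≤ 3 * s ^ 2 + 3 * s + 1 + (if s ≤ 1 then 0 else s ^ 2) ∧
      ∃ (c : k) (α β : Fin s → k) (S : Fin s → Fin s → k), c ≠ 0 ∧ (∀ i j, S i j = - S j i) ∧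
        ∃ R R' : QuadraticForm k E, (R = Q ∧ R' = Q' ∨ R = Q' ∧ R' = Q) ∧
        ∀ x ∈ cut (L ∪ L'), P x = c * R x + ∑ j, α j * q j x ∧
          P' x = c⁻¹ * R' x + ∑ j, β j * q j x ∧
          ∀ j, m j x =
            c * β j * R x + c⁻¹ * α j * R' x + ∑ l, (α j * β l + S j l) * q l x := by
  have hrich : ∀ M : Finset (Dual k E), ∀ b, M.card + b ≤ N → Rich q M b := by
    intro M b hM c hc L' hL'
    obtain ⟨x, hx, hne⟩ := hH c 0 0 (by simp [hc]) (by simp) (M ∪ L')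
      ((Finset.card_union_le _ _).trans (by omega))
    exact ⟨x, hx, by simpa using hne⟩
  obtain ⟨y, hyL, hyq, hyQ⟩ : ∃ y ∈ cut L, (∀ j, q j y = 0) ∧ Q y * Q' y ≠ 0 := by
    by_contra! hcon
    obtain ⟨L', hL', d, hd⟩ := factor_mem_span h2 q L (hrich _ _ (by nlinarith)) Q Q' hcon
    have hc : (L ∪ L').card ≤ N := (Finset.card_union_le _ _).trans (by nlinarith)
    rcases hd with hd | hd
    · obtain ⟨x, hx, hne⟩ := hH (fun j => - d j) 1 0 (by simp) (by simp) _ hc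
      exact hne (by simp [hd x hx])
    · obtain ⟨x, hx, hne⟩ := hH (fun j => - d j) 0 1 (by simp) (by simp) _ hc
      exact hne (by simp [hd x hx])
  have hinf : Infinite k := IsAlgClosed.instInfinite
  obtain ⟨L1, hL1, h1⟩ := polarise (ι := Fin s ⊕ Fin 2) (Sum.elim q ![Q, P])
    (Sum.elim m ![Q', -P']) L (by
      intro x hx
      have := hid x hx
      simp only [Fintype.sum_sum_type, Sum.elim_inl, Sum.elim_inr, Fin.sum_univ_two,
        Matrix.cons_val_zero, Matrix.cons_val_one, _root_.neg_apply]
      linear_combination this) hyL ⟨Sum.inr 0, Or.inl (by simpa using left_ne_zero_of_mul hyQ)⟩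
  simp only [Fintype.card_sum, Fintype.card_fin] at hL1
  simp only [Fintype.sum_sum_type, Sum.elim_inl, Sum.elim_inr, Fin.sum_univ_two,
        Matrix.cons_val_zero, Matrix.cons_val_one, _root_.neg_apply, hyq, zero_mul,
        zero_add] at h1
  have hyP : Q y * Q' y = P y * P' y := by
    have := hid y hyL
    simp only [hyq, zero_mul, Finset.sum_const_zero, zero_add] at this
    linear_combination this
  have ha : Q y ≠ 0 := left_ne_zero_of_mul hyQ
  have ha' : Q' y ≠ 0 := right_ne_zero_of_mul hyQ
  have hb : P y ≠ 0 := left_ne_zero_of_mul (hyP ▸ hyQ)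
  have hb' : P' y ≠ 0 := right_ne_zero_of_mul (hyP ▸ hyQ)
  have hc1 : (L ∪ L1).card ≤ s * (2 * s + 1) + (s + 1) :=
    (Finset.card_union_le _ _).trans (by omega)
  -- The product of the two factors is the difference of two squares; by `h1` and `hid` it
  -- vanishes on the common zeros of the `q j`.
  obtain ⟨L2, hL2, d, hd⟩ := factor_mem_span h2 q (L ∪ L1) (hrich _ _ (by nlinarith))
    (Q' y • Q - Q y • Q' - P' y • P + P y • P') (Q' y • Q - Q y • Q' + P' y • P - P y • P') (by
      intro x hx hq
      have e1 := h1 x hx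
      have e2 := hid x (mem_cut_union.1 hx).1
      simp only [hq, mul_zero, zero_mul, Finset.sum_const_zero, zero_add] at e1 e2
      simp only [_root_.sub_apply, _root_.add_apply, _root_.smul_apply,
        smul_eq_mul]
      linear_combination (Q' y * Q x + Q y * Q' x + P y * P' x + P' y * P x) * e1
        - 4 * Q y * Q' y * e2 - 4 * P x * P' x * hyP)
  have hc2 : (L ∪ L1 ∪ L2).card ≤ 3 * s ^ 2 + 3 * s + 1 :=
    (Finset.card_union_le _ _).trans (by nlinarith)
  have hr2 := hrich (L ∪ L1 ∪ L2) (bd s) (by omega)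
  have hsum : ∀ (e e' : k) (x : E), ∑ j, (e * d j + e' * m j y) * q j x =
      e * ∑ j, d j * q j x + e' * ∑ j, m j y * q j x := by
    intro e e' x
    rw [Finset.mul_sum, Finset.mul_sum, ← Finset.sum_add_distrib]
    exact Finset.sum_congr rfl fun j _ => by ring
  have finish : ∀ (c : k) (α β : Fin s → k) (R R' : QuadraticForm k E), c ≠ 0 →
      (R = Q ∧ R' = Q' ∨ R = Q' ∧ R' = Q) →
      (∀ x ∈ cut (L ∪ L1 ∪ L2), P x = c * R x + ∑ j, α j * q j x) →
      (∀ x ∈ cut (L ∪ L1 ∪ L2), P' x = c⁻¹ * R' x + ∑ j, β j * q j x) →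
      ∃ L' : Finset (Dual k E),
      (L ∪ L').card ≤ 3 * s ^ 2 + 3 * s + 1 + (if s ≤ 1 then 0 else s ^ 2) ∧
      ∃ (c : k) (α β : Fin s → k) (S : Fin s → Fin s → k), c ≠ 0 ∧ (∀ i j, S i j = - S j i) ∧
        ∃ R R' : QuadraticForm k E, (R = Q ∧ R' = Q' ∨ R = Q' ∧ R' = Q) ∧
        ∀ x ∈ cut (L ∪ L'), P x = c * R x + ∑ j, α j * q j x ∧
          P' x = c⁻¹ * R' x + ∑ j, β j * q j x ∧
          ∀ j, m j x =
            c * β j * R x + c⁻¹ * α j * R' x + ∑ l, (α j * β l + S j l) * q l x := by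
    intro c α β R R' hc hR hP hP'
    obtain ⟨L3, hL3, S, hS, hm⟩ := cofactors h2 q m R R' P P' (L ∪ L1 ∪ L2) hr2 (by
      intro x hx
      have := hid x (mem_cut_union.1 (mem_cut_union.1 hx).1).1
      rcases hR with ⟨rfl, rfl⟩ | ⟨rfl, rfl⟩
      · exact this
      · linear_combination this) c hc α β hP hP'
    refine ⟨L1 ∪ L2 ∪ L3, ?_, c, α, β, S, hc, hS, R, R', hR, fun x hx => ?_⟩
    · rw [← Finset.union_assoc, ← Finset.union_assoc]
      exact (Finset.card_union_le _ _).trans (by omega)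
    · rw [← Finset.union_assoc, ← Finset.union_assoc] at hx
      have := (mem_cut_union.1 hx).1
      exact ⟨hP x this, hP' x this, hm x hx⟩
  -- Adding or subtracting `h1` solves for `P` and `P'`.
  rcases hd with hd | hd
  · refine finish (Q' y / P' y) (fun j => -(2 * P' y)⁻¹ * d j + (2 * P' y)⁻¹ * m j y)
      (fun j => (2 * P y)⁻¹ * d j + (2 * P y)⁻¹ * m j y) Q Q' (div_ne_zero ha' hb')
      (Or.inl ⟨rfl, rfl⟩) (fun x hx => ?_) (fun x hx => ?_)
    all_goals
      have e1 := h1 x (mem_cut_union.1 hx).1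
      have e2 := hd x hx
      simp only [_root_.sub_apply, _root_.add_apply, _root_.smul_apply, smul_eq_mul] at e2
      rw [hsum]
      generalize ∑ j, d j * q j x = D at *
      generalize ∑ j, m j y * q j x = M at *
    · field_simp
      linear_combination -e1 - e2
    · rw [inv_div, (div_eq_div_iff ha' hb).2 (by linear_combination -hyP : P' y * P y = Q y * Q' y)]
      field_simp
      linear_combination -e1 + e2
  · refine finish (Q y / P' y) (fun j => (2 * P' y)⁻¹ * d j + (2 * P' y)⁻¹ * m j y)
      (fun j => -(2 * P y)⁻¹ * d j + (2 * P y)⁻¹ * m j y) Q' Q (div_ne_zero ha hb')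
      (Or.inr ⟨rfl, rfl⟩) (fun x hx => ?_) (fun x hx => ?_)
    all_goals
      have e1 := h1 x (mem_cut_union.1 hx).1
      have e2 := hd x hx
      simp only [_root_.sub_apply, _root_.add_apply, _root_.smul_apply, smul_eq_mul] at e2
      rw [hsum]
      generalize ∑ j, d j * q j x = D at *
      generalize ∑ j, m j y * q j x = M at *
    · field_simp
      linear_combination -e1 + e2
    · rw [inv_div, (div_eq_div_iff ha hb).2 (by linear_combination -hyP : P' y * P y = Q' y * Q y)]
      field_simp
      linear_combination -e1 - e2

end Duality

/-! ### Hyperbolic bases -/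

section Hyperbolic

variable {k : Type*} [Field k] {r s : ℕ}

/-- A binary quadratic form over an algebraically closed field has a nontrivial zero. -/
theorem exists_binary_zero [IsAlgClosed k] (h2 : (2 : k) ≠ 0) (a b c : k) :
    ∃ x y : k, ¬ (x = 0 ∧ y = 0) ∧ a * x ^ 2 + b * (x * y) + c * y ^ 2 = 0 := by
  by_cases ha : a = 0
  · exact ⟨1, 0, by simp, by simp [ha]⟩
  · have : NeZero (2 : k) := ⟨h2⟩
    obtain ⟨d, hd⟩ := IsAlgClosed.exists_pow_nat_eq (discrim a b c) (n := 2) (by norm_num)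
    obtain ⟨x, hx⟩ := exists_quadratic_eq_zero ha ⟨d, by rw [← hd, sq]⟩
    exact ⟨x, 1, by simp, by linear_combination hx⟩

/-- The polar form of `hypForm`. -/
noncomputable def bil : LinearMap.BilinForm k (Fin r ⊕ Fin r → k) :=
  LinearMap.mk₂ k (fun u v => ∑ i, (u (Sum.inl i) * v (Sum.inr i) + u (Sum.inr i) * v (Sum.inl i)))
    (by intro u u' v; rw [← Finset.sum_add_distrib]
        exact Finset.sum_congr rfl fun i _ => by simp only [Pi.add_apply]; ring)
    (by intro c u v; rw [smul_eq_mul, Finset.mul_sum]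
        exact Finset.sum_congr rfl fun i _ => by simp only [Pi.smul_apply, smul_eq_mul]; ring)
    (by intro u v v'; rw [← Finset.sum_add_distrib]
        exact Finset.sum_congr rfl fun i _ => by simp only [Pi.add_apply]; ring)
    (by intro c u v; rw [smul_eq_mul, Finset.mul_sum]
        exact Finset.sum_congr rfl fun i _ => by simp only [Pi.smul_apply, smul_eq_mul]; ring)

theorem bil_apply (u v : Fin r ⊕ Fin r → k) :
    bil u v = ∑ i, (u (Sum.inl i) * v (Sum.inr i) + u (Sum.inr i) * v (Sum.inl i)) := rfl

theorem bil_comm (u v : Fin r ⊕ Fin r → k) : bil u v = bil v u := by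
  rw [bil_apply, bil_apply]
  exact Finset.sum_congr rfl fun i _ => by ring

theorem bil_self (u : Fin r ⊕ Fin r → k) : bil u u = 2 * hypForm u := by
  rw [bil_apply, hypForm, Finset.mul_sum]
  exact Finset.sum_congr rfl fun i _ => by ring

/-- The vector representing a functional with respect to `bil`. -/
def repr (θ : (Fin r ⊕ Fin r → k) →ₗ[k] k) : Fin r ⊕ Fin r → k :=
  Sum.elim (fun i => θ (Pi.single (Sum.inr i) 1)) fun i => θ (Pi.single (Sum.inl i) 1)

theorem bil_repr (θ : (Fin r ⊕ Fin r → k) →ₗ[k] k) (v : Fin r ⊕ Fin r → k) :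
    bil (repr θ) v = θ v := by
  conv_rhs => rw [LinearMap.pi_apply_eq_sum_univ θ v]
  rw [bil_apply, Fintype.sum_sum_type, Finset.sum_add_distrib, add_comm]
  congr 1
  · refine Finset.sum_congr rfl fun i _ => ?_
    rw [smul_eq_mul, mul_comm]
    congr 1
    simp only [repr, Sum.elim_inr]
    congr 1; funext j; simp [Pi.single_apply, eq_comm]
  · refine Finset.sum_congr rfl fun i _ => ?_
    rw [smul_eq_mul, mul_comm]
    congr 1
    simp only [repr, Sum.elim_inl]
    congr 1; funext j; simp [Pi.single_apply, eq_comm]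

/-- The vectors `X i`, `Y i` form a hyperbolic basis for `bil`. -/
structure Hyp (X Y : Fin r → Fin r ⊕ Fin r → k) : Prop where
  xx : ∀ i j, bil (X i) (X j) = 0
  yy : ∀ i j, bil (Y i) (Y j) = 0
  xy : ∀ i j, bil (X i) (Y j) = if i = j then 1 else 0

/-- The linear map sending the standard basis to `X`, `Y`. -/
noncomputable def isom (X Y : Fin r → Fin r ⊕ Fin r → k) :
    (Fin r ⊕ Fin r → k) →ₗ[k] (Fin r ⊕ Fin r → k) :=
  Fintype.linearCombination k (Sum.elim X Y)

theorem isom_apply (X Y : Fin r → Fin r ⊕ Fin r → k) (v : Fin r ⊕ Fin r → k) :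
    isom X Y v = ∑ i, v (Sum.inl i) • X i + ∑ i, v (Sum.inr i) • Y i := by
  simp [isom, Fintype.linearCombination_apply]

theorem Hyp.bil_isom_X {X Y : Fin r → Fin r ⊕ Fin r → k} (h : Hyp X Y) (v : Fin r ⊕ Fin r → k)
    (j : Fin r) : bil (isom X Y v) (X j) = v (Sum.inr j) := by
  simp [isom_apply, h.xx, bil_comm _ (X j), h.xy]

theorem Hyp.bil_isom_Y {X Y : Fin r → Fin r ⊕ Fin r → k} (h : Hyp X Y) (v : Fin r ⊕ Fin r → k)
    (j : Fin r) : bil (isom X Y v) (Y j) = v (Sum.inl j) := by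
  simp [isom_apply, h.yy, h.xy]

theorem Hyp.hypForm_isom (h2 : (2 : k) ≠ 0) {X Y : Fin r → Fin r ⊕ Fin r → k} (h : Hyp X Y)
    (v : Fin r ⊕ Fin r → k) : hypForm (isom X Y v) = hypForm v := by
  refine mul_left_cancel₀ h2 ?_
  rw [← bil_self, ← bil_self]
  conv_lhs => enter [2]; rw [isom_apply]
  simp only [map_add, map_sum, map_smul, h.bil_isom_X, h.bil_isom_Y, smul_eq_mul]
  rw [bil_apply, Finset.sum_add_distrib]

theorem Hyp.isom_bijective {X Y : Fin r → Fin r ⊕ Fin r → k} (h : Hyp X Y) :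
    Function.Bijective (isom X Y) := by
  have : Function.Injective (isom X Y) := by
    rw [injective_iff_map_eq_zero]
    intro v hv
    funext i
    rcases i with i | i
    · rw [← h.bil_isom_Y v, hv]; simp
    · rw [← h.bil_isom_X v, hv]; simp
  exact ⟨this, LinearMap.injective_iff_surjective.1 this⟩

/-- The dual quadratic form `∑ i, θ (X i) * θ (Y i)` does not depend on the hyperbolic basis. -/
theorem Hyp.sum_mul (h2 : (2 : k) ≠ 0) {X Y : Fin r → Fin r ⊕ Fin r → k} (h : Hyp X Y)
    (θ : (Fin r ⊕ Fin r → k) →ₗ[k] k) :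
    ∑ i, θ (X i) * θ (Y i) = ∑ i, θ (Pi.single (Sum.inl i) 1) * θ (Pi.single (Sum.inr i) 1) := by
  obtain ⟨a, ha⟩ := h.isom_bijective.2 (repr θ)
  calc ∑ i, θ (X i) * θ (Y i) = hypForm a := by
        simp only [← bil_repr θ, ← ha, h.bil_isom_X, h.bil_isom_Y, hypForm, mul_comm]
    _ = hypForm (repr θ) := by rw [← ha, h.hypForm_isom h2]
    _ = _ := by simp [hypForm, repr, mul_comm]

/-- Witt's theorem for a totally isotropic subspace of dimension one less than the maximum. -/
theorem exists_hyp [IsAlgClosed k] (h2 : (2 : k) ≠ 0) (w : Fin s → Fin (s + 1) ⊕ Fin (s + 1) → k)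
    (hw : LinearIndependent k w) (hw0 : ∀ i j, bil (w i) (w j) = 0) :
    ∃ X Y : Fin (s + 1) → Fin (s + 1) ⊕ Fin (s + 1) → k, Hyp X Y ∧
      ∀ j : Fin s, X j.castSucc = w j := by
  obtain ⟨G, hG⟩ := (Fintype.linearCombination k w).exists_leftInverse_of_injective
    (LinearMap.ker_eq_bot.2 hw.fintypeLinearCombination_injective)
  have hGw : ∀ j l, G (w l) j = if j = l then 1 else 0 := by
    intro j l
    have := congrFun (LinearMap.congr_fun hG (Pi.single l 1)) j
    simpa [Fintype.linearCombination_apply, Pi.single_apply] using this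
  set u : Fin s → Fin (s + 1) ⊕ Fin (s + 1) → k := fun j => repr (LinearMap.proj j ∘ₗ G) with hu
  have huw : ∀ j l, bil (u j) (w l) = if j = l then 1 else 0 := by
    intro j l; rw [hu, bil_repr]; exact hGw j l
  -- Subtracting half of the Gram matrix makes the dual vectors isotropic and mutually orthogonal.
  set u' : Fin s → Fin (s + 1) ⊕ Fin (s + 1) → k :=
    fun j => u j - (2 : k)⁻¹ • ∑ l, bil (u j) (u l) • w l with hu'
  have huw' : ∀ j l, bil (u' j) (w l) = if j = l then 1 else 0 := by
    intro j l; simp [hu', huw, hw0]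
  have huu' : ∀ j l, bil (u' j) (u' l) = 0 := by
    intro j l
    have e : bil (u' j) (u' l) = bil (u' j) (u l) - (2 : k)⁻¹ * bil (u l) (u j) := by
      have e : u' l = u l - (2 : k)⁻¹ • ∑ m, bil (u l) (u m) • w m := rfl
      rw [e]
      simp [huw']
    rw [e, hu']
    simp only [map_sub, map_smul, map_sum, smul_eq_mul, LinearMap.sub_apply, LinearMap.smul_apply,
      LinearMap.sum_apply, bil_comm (w _) (u l), huw]
    simp [bil_comm (u l) (u j)]
    field_simp
    ring
  let W : Submodule k (Fin (s + 1) ⊕ Fin (s + 1) → k) :=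
    LinearMap.ker (LinearMap.pi (Sum.elim (fun j => bil (w j)) fun j => bil (u' j)))
  have hW : ∀ x, x ∈ W ↔ (∀ j, bil (w j) x = 0) ∧ ∀ j, bil (u' j) x = 0 := by
    intro x
    simp [W, LinearMap.mem_ker, _root_.funext_iff]
  -- The orthogonal `W` of the first `s` hyperbolic planes is the last one; it contains an isotropic vector.
  obtain ⟨e, he0, heW, hee⟩ : ∃ e, e ≠ 0 ∧ e ∈ W ∧ bil e e = 0 := by
    have h1 : 2 ≤ finrank k W := by
      have := LinearMap.finrank_range_add_finrank_ker
        (LinearMap.pi (Sum.elim (fun j => bil (w j)) fun j => bil (u' j)))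
      have h3 := Submodule.finrank_le (LinearMap.range
        (LinearMap.pi (Sum.elim (fun j => bil (w j)) fun j => bil (u' j))))
      simp only [finrank_fintype_fun_eq_card, Fintype.card_sum, Fintype.card_fin] at this h3
      change 2 ≤ finrank k (LinearMap.ker _)
      omega
    obtain ⟨x, hx⟩ := exists_linearIndependent_of_le_finrank h1
    obtain ⟨a, b, hab, h0⟩ := exists_binary_zero h2 (bil (x 0).1 (x 0).1)
      (2 * bil (x 0).1 (x 1).1) (bil (x 1).1 (x 1).1)
    refine ⟨a • (x 0).1 + b • (x 1).1, fun h => hab ?_, ?_, ?_⟩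
    · have := Fintype.linearIndependent_iff.1 hx ![a, b] (by
        rw [Fin.sum_univ_two]; exact Subtype.ext h)
      exact ⟨this 0, this 1⟩
    · exact add_mem (Submodule.smul_mem _ _ (x 0).2) (Submodule.smul_mem _ _ (x 1).2)
    · simp only [map_add, map_smul, LinearMap.add_apply, LinearMap.smul_apply, smul_eq_mul,
        bil_comm (x 1).1 (x 0).1]
      linear_combination h0
  obtain ⟨f0, hf0⟩ : ∃ f, bil e f = 1 := by
    obtain ⟨i, hi⟩ := Function.ne_iff.1 he0
    have hi : e i ≠ 0 := hi
    refine ⟨(e i)⁻¹ • repr (LinearMap.proj i), ?_⟩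
    rw [bil_comm, map_smul, LinearMap.smul_apply, bil_repr]
    simpa using inv_mul_cancel₀ hi
  set f1 := f0 - ∑ j, bil (u' j) f0 • w j - ∑ j, bil (w j) f0 • u' j with hf1
  rw [hW] at heW
  have hef1 : bil e f1 = 1 := by
    simp [hf1, hf0, bil_comm e (w _), bil_comm e (u' _), heW]
  have hf1W : f1 ∈ W := by
    rw [hW]
    constructor
    · intro j; simp [hf1, hw0, bil_comm (w _) (u' _), huw']
    · intro j; simp [hf1, huu', huw']
  rw [hW] at hf1W
  set f := f1 - ((2 : k)⁻¹ * bil f1 f1) • e with hf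
  have hef : bil e f = 1 := by simp [hf, hef1, hee]
  have hff : bil f f = 0 := by
    simp [hf, hef1, hee, bil_comm f1 e]
    field_simp
    ring
  have hfw : ∀ j, bil (w j) f = 0 := by intro j; simp [hf, hf1W, heW]
  have hfu : ∀ j, bil (u' j) f = 0 := by intro j; simp [hf, hf1W, heW]
  refine ⟨Fin.snoc w e, Fin.snoc u' f, ⟨?_, ?_, ?_⟩, by simp⟩
  · intro i j
    induction i using Fin.lastCases <;> induction j using Fin.lastCases <;>
      simp [hee, heW, hw0, bil_comm e (w _)]
  · intro i j
    induction i using Fin.lastCases <;> induction j using Fin.lastCases <;>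
      simp [hff, hfu, huu', bil_comm f (u' _)]
  · intro i j
    induction i using Fin.lastCases <;> induction j using Fin.lastCases <;>
      simp [hef, hfw, bil_comm e (u' _), heW, bil_comm (w _) (u' _), huw', eq_comm,
        (Fin.castSucc_lt_last _).ne]

set_option linter.unusedSimpArgs false in
/-- Changing a hyperbolic basis while keeping all but one of the `X j`. -/
theorem Hyp.modify {X Y : Fin (s + 1) → Fin (s + 1) ⊕ Fin (s + 1) → k} (h : Hyp X Y) {c : k}
    (hc : c ≠ 0) (α β : Fin s → k) (S : Fin s → Fin s → k) (hS : ∀ i j, S i j = - S j i) :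
    Hyp (Fin.snoc (fun j => X j.castSucc)
        (c • X (Fin.last s) + ∑ l, α l • X (Fin.castSucc l)))
      (Fin.snoc (fun j => Y j.castSucc - (c * β j) • X (Fin.last s)
          - (c⁻¹ * α j) • Y (Fin.last s) - ∑ l, (α j * β l + S j l) • X (Fin.castSucc l))
        (c⁻¹ • Y (Fin.last s) + ∑ l, β l • X (Fin.castSucc l))) := by
  have hyx : ∀ i j, bil (Y i) (X j) = if i = j then 1 else 0 := by
    intro i j; rw [bil_comm, h.xy]; simp [eq_comm]
  have hne : ∀ j : Fin s, Fin.last s ≠ j.castSucc := fun j => (Fin.castSucc_lt_last j).ne'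
  have hne' : ∀ j : Fin s, j.castSucc ≠ Fin.last s := fun j => (Fin.castSucc_lt_last j).ne
  refine ⟨?_, ?_, ?_⟩
  · intro i j
    induction i using Fin.lastCases <;> induction j using Fin.lastCases <;>
      simp [h.xx]
  · intro i j
    induction i using Fin.lastCases with
    | last =>
      induction j using Fin.lastCases with
      | last => simp [h.yy, h.xx, h.xy, hyx, hne, hne']
      | cast j =>
        simp [h.yy, h.xx, h.xy, hyx, hne, hne']
        field_simp
        ring
    | cast i =>
      induction j using Fin.lastCases with
      | last =>
        simp [h.yy, h.xx, h.xy, hyx, hne, hne']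
        field_simp
        ring
      | cast j =>
        simp [h.yy, h.xx, h.xy, hyx, hne, hne']
        rw [hS i j]
        field_simp
        ring
  · intro i j
    induction i using Fin.lastCases with
    | last =>
      induction j using Fin.lastCases with
      | last => simp [h.yy, h.xx, h.xy, hyx, hne, hne', hc]
      | cast j =>
        simp [h.yy, h.xx, h.xy, hyx, hne, hne']
        field_simp
        ring
    | cast i =>
      induction j using Fin.lastCases <;> simp [h.yy, h.xx, h.xy, hyx, hne, hne']

end Hyperbolic

/-! ### Families indexed by the hyperbolic space -/

section Decompositions

open QuadraticMap
open scoped Classical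

variable {k : Type*} [Field k] {E : Type*} [AddCommGroup E] [Module k E] {r s : ℕ}

/-- The quadratic form `∑ i, (u (inl i) • q i + u (inr i) • q' i)`. -/
noncomputable def qf (q q' : Fin r → QuadraticForm k E) :
    (Fin r ⊕ Fin r → k) →ₗ[k] QuadraticForm k E :=
  Fintype.linearCombination k (Sum.elim q q')

theorem qf_apply (q q' : Fin r → QuadraticForm k E) (u : Fin r ⊕ Fin r → k) (x : E) :
    qf q q' u x = ∑ i, u (Sum.inl i) * q i x + ∑ i, u (Sum.inr i) * q' i x := by
  simp [qf, Fintype.linearCombination_apply]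

/-- The functional `u ↦ qf q q' u x`. -/
noncomputable def ev (q q' : Fin r → QuadraticForm k E) (x : E) :
    (Fin r ⊕ Fin r → k) →ₗ[k] k :=
  Fintype.linearCombination k (Sum.elim (fun i => q i x) fun i => q' i x)

theorem ev_apply (q q' : Fin r → QuadraticForm k E) (x : E) (u : Fin r ⊕ Fin r → k) :
    ev q q' x u = qf q q' u x := by
  simp [ev, qf_apply, Fintype.linearCombination_apply]

/-- The vector `(q' x, q x)`, which represents the functional `ev q q' x`. -/
noncomputable def pt (q q' : Fin r → QuadraticForm k E) (x : E) : Fin r ⊕ Fin r → k :=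
  Sum.elim (fun i => q' i x) fun i => q i x

theorem bil_pt (q q' : Fin r → QuadraticForm k E) (x : E) (u : Fin r ⊕ Fin r → k) :
    bil (pt q q' x) u = qf q q' u x := by
  simp only [bil_apply, qf_apply, pt, Sum.elim_inl, Sum.elim_inr, Finset.sum_add_distrib,
    mul_comm (u _)]
  rw [add_comm]

theorem hypForm_pt (q q' : Fin r → QuadraticForm k E) (x : E) :
    hypForm (pt q q' x) = ∑ i, q i x * q' i x := by
  simp [hypForm, pt, mul_comm]

theorem Hyp.sum_qf (h2 : (2 : k) ≠ 0) {X Y : Fin r → Fin r ⊕ Fin r → k} (h : Hyp X Y)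
    (q q' : Fin r → QuadraticForm k E) (x : E) :
    ∑ i, qf q q' (X i) x * qf q q' (Y i) x = ∑ i, q i x * q' i x := by
  have := h.sum_mul h2 (ev q q' x)
  simp only [ev_apply] at this
  rw [this]
  refine Finset.sum_congr rfl fun i _ => ?_
  simp [qf_apply, Pi.single_apply]

/-- No combination of the `q i`, `q' i` with isotropic coefficient vector vanishes on a subspace
cut out by at most `N` linear forms. -/
def IsoRich (q q' : Fin r → QuadraticForm k E) (N : ℕ) : Prop :=
  ∀ u : Fin r ⊕ Fin r → k, u ≠ 0 → hypForm u = 0 → ∀ L : Finset (Dual k E), L.card ≤ N →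
    ∃ x ∈ cut L, qf q q' u x ≠ 0

theorem IsoRich.rich {q q' : Fin r → QuadraticForm k E} {N : ℕ} (h : IsoRich q q' N)
    {L : Finset (Dual k E)} {m : ℕ} (hL : L.card + m ≤ N) : Rich q L m := by
  intro c hc L' hL'
  obtain ⟨x, hx, hne⟩ := h (Sum.elim c 0)
    (fun h0 => hc (_root_.funext fun i => congrFun h0 (Sum.inl i)))
    (by simp [hypForm]) (L ∪ L') ((Finset.card_union_le _ _).trans (by omega))
  exact ⟨x, hx, by simpa [qf_apply] using hne⟩

/-- Among the common zeros of the `q i` in a subspace of small codimension, the vectors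
`q' y` are not contained in a subspace of codimension two of `k ^ r`. Otherwise two independent
combinations of the `q' i` would be combinations of the `q i`; some member of the pencil of the
resulting relations has isotropic coefficients. -/
theorem IsoRich.exists_zero [IsAlgClosed k] (h2 : (2 : k) ≠ 0) {q q' : Fin r → QuadraticForm k E}
    {N : ℕ} (h : IsoRich q q' N) (L : Finset (Dual k E)) (hL : L.card + bd r ≤ N)
    (α β : Fin r → k) (hαβ : ∀ a b : k, a • α + b • β = 0 → a = 0 ∧ b = 0) :
    ∃ y ∈ cut L, (∀ i, q i y = 0) ∧ ¬ (∑ i, α i * q' i y = 0 ∧ ∑ i, β i * q' i y = 0) := by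
  obtain ⟨z, hz, hzL⟩ := exists_dual h2 r q L (h.rich hL)
  by_contra! hcon
  have key : ∀ γ : Fin r → k, (∀ y ∈ cut L, (∀ i, q i y = 0) → ∑ i, γ i * q' i y = 0) →
      ∃ γ' : Fin r → k, ∀ x ∈ cut (L ∪ orth q z), ∑ i, γ i * q' i x = ∑ j, γ' j * q j x := by
    intro γ hγ
    refine ⟨fun j => (∑ i, γ i • q' i : QuadraticForm k E) (z j), fun x hx => ?_⟩
    have := hz.eq_sum h2 hzL (∑ i, γ i • q' i) (by
      simpa using hγ) hx
    rw [← this]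
    simp
  obtain ⟨α', hα'⟩ := key α fun y hy hq => (hcon y hy hq).1
  obtain ⟨β', hβ'⟩ := key β fun y hy hq => (hcon y hy hq).2
  obtain ⟨a, b, hab, h0⟩ := exists_binary_zero h2 (∑ i, α i * α' i)
    (∑ i, (α i * β' i + β i * α' i)) (∑ i, β i * β' i)
  obtain ⟨x, hx, hne⟩ := h (Sum.elim (-(a • α' + b • β')) (a • α + b • β))
    (fun h => hab (hαβ a b (_root_.funext fun i => congrFun h (Sum.inr i)))) (by
      rw [← neg_eq_zero, ← h0, hypForm, Finset.sum_mul, Finset.sum_mul, Finset.sum_mul,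
        ← Finset.sum_add_distrib, ← Finset.sum_add_distrib, ← Finset.sum_neg_distrib]
      refine Finset.sum_congr rfl fun i _ => ?_
      simp
      ring) (L ∪ orth q z) ((Finset.card_union_le _ _).trans (by
        have := card_orth q z
        have := sq_le_bd r
        nlinarith))
  apply hne
  rw [qf_apply]
  have e1 := hα' x hx
  have e2 := hβ' x hx
  simp [add_mul, Finset.sum_add_distrib, mul_assoc, ← Finset.mul_sum, e1, e2]

theorem exists_independent_pair {M : Type*} [AddCommGroup M] [Module k M] (W : Submodule k M)
    (h : 2 ≤ finrank k W) : ∃ x : Fin 2 → M, LinearIndependent k x ∧ ∀ i, x i ∈ W := by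
  obtain ⟨x, hx⟩ := exists_linearIndependent_of_le_finrank h
  exact ⟨fun i => W.subtype (x i), hx.map' W.subtype W.ker_subtype, fun i => (x i).2⟩

/-- A subspace of codimension at least two satisfies two independent linear equations. -/
theorem exists_two_equations {j m : ℕ} (hjm : j + 2 ≤ m) (y : Fin j → Fin m → k)
    (hy : LinearIndependent k y) : ∃ α β : Fin m → k,
      (∀ a b : k, a • α + b • β = 0 → a = 0 ∧ b = 0) ∧
      ∀ v ∈ Submodule.span k (Set.range y), ∑ i, α i * v i = 0 ∧ ∑ i, β i * v i = 0 := by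
  obtain ⟨x, hx, hxm⟩ : ∃ x : Fin 2 → Dual k (Fin m → k), LinearIndependent k x ∧
      ∀ i, x i ∈ (Submodule.span k (Set.range y)).dualAnnihilator := by
    have h1 := Subspace.finrank_add_finrank_dualAnnihilator_eq (Submodule.span k (Set.range y))
    rw [finrank_span_eq_card hy, Fintype.card_fin, finrank_fintype_fun_eq_card,
      Fintype.card_fin] at h1
    have h3 : 2 ≤ finrank k (Submodule.span k (Set.range y)).dualAnnihilator := by omega
    exact exists_independent_pair _ h3
  have hdual : ∀ (θ : Dual k (Fin m → k)) (v : Fin m → k),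
      ∑ i, θ (Pi.single i 1) * v i = θ v := by
    intro θ v
    rw [LinearMap.pi_apply_eq_sum_univ θ v]
    refine Finset.sum_congr rfl fun i _ => ?_
    rw [smul_eq_mul, mul_comm]
    congr 2; funext l; simp [Pi.single_apply, eq_comm]
  refine ⟨fun i => x 0 (Pi.single i 1), fun i => x 1 (Pi.single i 1), fun a b hab => ?_,
    fun v hv => ?_⟩
  · have h0 : a • x 0 + b • x 1 = 0 := by
      refine LinearMap.ext fun v => ?_
      rw [← hdual]
      refine Finset.sum_eq_zero fun i _ => ?_
      have : a * x 0 (Pi.single i 1) + b * x 1 (Pi.single i 1) = 0 := congrFun hab i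
      rw [LinearMap.add_apply, LinearMap.smul_apply, LinearMap.smul_apply, smul_eq_mul,
        smul_eq_mul, this, zero_mul]
    have := Fintype.linearIndependent_iff.1 hx ![a, b] (by rw [Fin.sum_univ_two]; exact h0)
    exact ⟨this 0, this 1⟩
  · rw [hdual, hdual]
    exact ⟨(Submodule.mem_dualAnnihilator _).1 (hxm 0) _ hv,
      (Submodule.mem_dualAnnihilator _).1 (hxm 1) _ hv⟩

/-! ### Relations between two decompositions -/

/-- There are `j ≤ s` common zeros `y a` of the `q i` with independent `q' (y a)` such that
polarising the identity `∑ q i * q' i = ∑ p i * p' i` at them yields relations between the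
two families, with totally isotropic coefficient vectors on both sides. -/
theorem IsoRich.exists_points [IsAlgClosed k] (h2 : (2 : k) ≠ 0)
    {q q' p p' : Fin (s + 1) → QuadraticForm k E} {N : ℕ} (h : IsoRich q q' N)
    (hid : ∀ x, ∑ i, q i x * q' i x = ∑ i, p i x * p' i x)
    (hN : (s - 1) * (2 * s + 1) + bd (s + 1) ≤ N) : ∀ j ≤ s, ∃ (y : Fin j → E)
      (L : Finset (Dual k E)), L.card ≤ j * (2 * s + 1) ∧ (∀ a i, q i (y a) = 0) ∧
      LinearIndependent k (fun a i => q' i (y a)) ∧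
      (∀ a, ∀ x ∈ cut L, qf q q' (pt q q' (y a)) x = qf p p' (pt p p' (y a)) x) ∧
      ∀ a b, bil (pt p p' (y a)) (pt p p' (y b)) = 0 := by
  have hinf : Infinite k := IsAlgClosed.instInfinite
  intro j
  induction j with
  | zero =>
    intro _
    exact ⟨fun a => a.elim0, ∅, by simp, fun a => a.elim0, linearIndependent_empty_type,
      fun a => a.elim0, fun a => a.elim0⟩
  | succ j ih =>
    intro hj
    obtain ⟨y, L, hL, hq, hli, hrel, hiso⟩ := ih (by omega)
    obtain ⟨α, β, hαβ, hspan⟩ := exists_two_equations (by omega) _ hli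
    obtain ⟨y0, hy0L, hy0, hne⟩ := h.exists_zero h2 L (by
        have : j * (2 * s + 1) ≤ (s - 1) * (2 * s + 1) := Nat.mul_le_mul_right _ (by omega)
        omega) α β hαβ
    replace hspan : (fun i => q' i y0) ∉ Submodule.span k (Set.range fun a i => q' i (y a)) :=
      fun hmem => hne (hspan _ hmem)
    obtain ⟨L', hL', hpol⟩ := polarise (ι := Fin (s + 1) ⊕ Fin (s + 1)) (Sum.elim q p)
      (Sum.elim q' (-p')) ∅ (by
        intro x _
        have := hid x
        simp [this]) (y := y0) (by simp [cut]) (by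
        by_contra! hcon
        apply hspan
        have : (fun i => q' i y0) = 0 := _root_.funext fun i => (hcon (Sum.inl i)).2
        rw [this]; exact zero_mem _)
    rw [Finset.empty_union] at hpol
    simp only [Fintype.card_sum, Fintype.card_fin] at hL'
    refine ⟨Fin.snoc y y0, L ∪ L', ?_, ?_, ?_, ?_, ?_⟩
    · refine (Finset.card_union_le _ _).trans ?_
      rw [add_mul]; omega
    · intro a
      induction a using Fin.lastCases <;> simp [hq, hy0]
    · have := linearIndependent_finSnoc.2 ⟨hli, hspan⟩
      have e : (fun a i => q' i ((Fin.snoc y y0 : Fin (j + 1) → E) a)) =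
          Fin.snoc (fun a i => q' i (y a)) fun i => q' i y0 := by
        funext a
        induction a using Fin.lastCases <;> simp
      rwa [e]
    · intro a x hx
      rw [mem_cut_union] at hx
      induction a using Fin.lastCases with
      | cast a => simpa using hrel a x hx.1
      | last =>
        have := hpol x hx.2
        simp only [Fin.snoc_last, qf_apply, pt, Sum.elim_inl, Sum.elim_inr]
        simp [Finset.sum_add_distrib] at this
        linear_combination this
    · have hb : ∀ b, bil (pt p p' y0) (pt p p' (y b)) = 0 := by
        intro b
        rw [bil_pt, ← hrel b y0 hy0L, qf_apply]
        simp [hy0, pt, hq]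
      have h0 : bil (pt p p' y0) (pt p p' y0) = 0 := by
        rw [bil_self, hypForm_pt, ← hid]
        simp [hy0]
      intro a b
      induction a using Fin.lastCases <;> induction b using Fin.lastCases <;>
        simp [hiso, hb, h0, bil_comm (pt p p' (y _)) (pt p p' y0)]

theorem Hyp.swap_last {X Y : Fin (s + 1) → Fin (s + 1) ⊕ Fin (s + 1) → k} (h : Hyp X Y) :
    Hyp (Fin.snoc (fun j => X j.castSucc) (Y (Fin.last s)))
      (Fin.snoc (fun j => Y j.castSucc) (X (Fin.last s))) := by
  have hyx : ∀ i j, bil (Y i) (X j) = if i = j then 1 else 0 := by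
    intro i j; rw [bil_comm, h.xy]; simp [eq_comm]
  have hne : ∀ j : Fin s, Fin.last s ≠ j.castSucc := fun j => (Fin.castSucc_lt_last j).ne'
  have hne' : ∀ j : Fin s, j.castSucc ≠ Fin.last s := fun j => (Fin.castSucc_lt_last j).ne
  refine ⟨?_, ?_, ?_⟩ <;> intro i j <;>
    induction i using Fin.lastCases <;> induction j using Fin.lastCases <;>
    simp [hne, hne', hyx, h.xx, h.yy, h.xy]

/-- The uniqueness statement in terms of quadratic forms on a vector space. -/
theorem IsoRich.uniqueness [IsAlgClosed k] (h2 : (2 : k) ≠ 0)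
    {q q' p p' : Fin (s + 1) → QuadraticForm k E} {N : ℕ} (h : IsoRich q q' N)
    (hid : ∀ x, ∑ i, q i x * q' i x = ∑ i, p i x * p' i x)
    (hN : (s - 1) * (2 * s + 1) + bd (s + 1) ≤ N) (hN' : 3 * s ^ 2 + 3 * s + 1 + bd s ≤ N) :
    ∃ L : Finset (Dual k E),
      L.card ≤ 3 * s ^ 2 + 3 * s + 1 + (if s ≤ 1 then 0 else s ^ 2) ∧
      ∃ A : (Fin (s + 1) ⊕ Fin (s + 1) → k) →ₗ[k] (Fin (s + 1) ⊕ Fin (s + 1) → k),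
        (∀ v, hypForm (A v) = hypForm v) ∧
        ∀ v, ∀ x ∈ cut L, qf p p' v x = qf q q' (A v) x := by
  obtain ⟨y, L, hL, hy, hli, hrel, hiso⟩ := h.exists_points h2 hid hN s le_rfl
  -- The coefficient vectors on both sides are independent.
  have hsum0 : ∀ c : Fin s → k, ∑ a, c a • pt q q' (y a) = 0 → c = 0 := by
    intro c hc
    refine _root_.funext (Fintype.linearIndependent_iff.1 hli c ?_)
    refine _root_.funext fun i => ?_
    have := congrFun hc (Sum.inl i)
    simpa [pt] using this
  have hv : LinearIndependent k fun a => pt q q' (y a) :=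
    Fintype.linearIndependent_iff.2 fun c hc => congrFun (hsum0 c hc)
  have hw : LinearIndependent k fun a => pt p p' (y a) := by
    refine Fintype.linearIndependent_iff.2 fun c hc => congrFun ?_
    by_contra hc0
    obtain ⟨x, hx, hne⟩ := h (∑ a, c a • pt q q' (y a)) (fun h0 => hc0 (hsum0 c h0))
      (by simp [hypForm, pt, hy]) L (by nlinarith)
    apply hne
    have e : qf p p' (∑ a, c a • pt p p' (y a)) x = 0 := by rw [hc]; simp
    rw [map_sum] at e ⊢
    rw [← e]
    simp [hrel _ x hx]
  obtain ⟨X, Y, hXY, hX⟩ := exists_hyp h2 (fun a => pt q q' (y a)) hv (by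
    intro a b
    simp [bil_apply, pt, hy])
  obtain ⟨Z, W, hZW, hZ⟩ := exists_hyp h2 (fun a => pt p p' (y a)) hw hiso
  have hXZ : ∀ j : Fin s, ∀ x ∈ cut L, qf p p' (Z j.castSucc) x = qf q q' (X j.castSucc) x := by
    intro j x hx
    rw [hX, hZ, hrel j x hx]
  obtain ⟨L', hL', c, α, β, S, hc, hS, R, R', hR, hcon⟩ := last_pair h2 (N := N)
    (fun j : Fin s => qf q q' (X j.castSucc))
    (fun j : Fin s => qf q q' (Y j.castSucc) - qf p p' (W j.castSucc))
    (qf q q' (X (Fin.last s))) (qf q q' (Y (Fin.last s))) (qf p p' (Z (Fin.last s)))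
    (qf p p' (W (Fin.last s))) L hL hN' (by
      intro x hx
      have e1 := hXY.sum_qf h2 q q' x
      have e2 := hZW.sum_qf h2 p p' x
      rw [Fin.sum_univ_castSucc] at e1 e2
      simp only [hXZ _ x hx] at e2
      simp only [_root_.sub_apply, mul_sub, Finset.sum_sub_distrib]
      linear_combination e1 - e2 + hid x) (by
      intro c d d' hne hdd L' hL'
      set u : Fin (s + 1) ⊕ Fin (s + 1) → k :=
        Sum.elim (Fin.snoc c d) (Fin.snoc (fun _ => 0) d') with hu
      obtain ⟨x, hx, hx0⟩ := h (isom X Y u) (by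
        intro h0
        have hu0 : u = 0 := hXY.isom_bijective.1 (by rw [h0, map_zero])
        refine hne ⟨_root_.funext fun j => ?_, ?_, ?_⟩
        · simpa [hu] using congrFun hu0 (Sum.inl j.castSucc)
        · simpa [hu] using congrFun hu0 (Sum.inl (Fin.last s))
        · simpa [hu] using congrFun hu0 (Sum.inr (Fin.last s)))
        (by rw [hXY.hypForm_isom h2, hypForm, Fin.sum_univ_castSucc]; simp [hu, hdd]) L' hL'
      refine ⟨x, hx, ?_⟩
      rw [isom_apply] at hx0
      simpa [Fin.sum_univ_castSucc, hu, add_assoc] using hx0)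
  -- In the second case the roles of the last two basis vectors are exchanged.
  obtain ⟨X', Y', hXY', hX', hY', hR, hR'⟩ : ∃ X' Y', Hyp X' Y' ∧
      (∀ j : Fin s, X' j.castSucc = X j.castSucc) ∧ (∀ j : Fin s, Y' j.castSucc = Y j.castSucc) ∧
      R = qf q q' (X' (Fin.last s)) ∧ R' = qf q q' (Y' (Fin.last s)) := by
    rcases hR with ⟨rfl, rfl⟩ | ⟨rfl, rfl⟩
    · exact ⟨X, Y, hXY, fun _ => rfl, fun _ => rfl, rfl, rfl⟩
    · exact ⟨_, _, hXY.swap_last, by simp, by simp, by simp, by simp⟩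
  have hnew := hXY'.modify hc α β S hS
  set X₁ := Fin.snoc (α := fun _ => Fin (s + 1) ⊕ Fin (s + 1) → k) (fun j => X' j.castSucc)
    (c • X' (Fin.last s) + ∑ l, α l • X' (Fin.castSucc l)) with hX₁
  set Y₁ := Fin.snoc (α := fun _ => Fin (s + 1) ⊕ Fin (s + 1) → k)
    (fun j => Y' j.castSucc - (c * β j) • X' (Fin.last s)
          - (c⁻¹ * α j) • Y' (Fin.last s) - ∑ l, (α j * β l + S j l) • X' (Fin.castSucc l))
        (c⁻¹ • Y' (Fin.last s) + ∑ l, β l • X' (Fin.castSucc l)) with hY₁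
  have hZ₁ : ∀ x ∈ cut (L ∪ L'), ∀ i, qf p p' (Z i) x = qf q q' (X₁ i) x := by
    intro x hx i
    obtain ⟨e1, e2, e3⟩ := hcon x hx
    induction i using Fin.lastCases with
    | last => rw [e1]; simp [hX₁, hR, hX']
    | cast j => rw [hXZ j x (mem_cut_union.1 hx).1]; simp [hX₁, hX']
  have hW₁ : ∀ x ∈ cut (L ∪ L'), ∀ i, qf p p' (W i) x = qf q q' (Y₁ i) x := by
    intro x hx i
    obtain ⟨e1, e2, e3⟩ := hcon x hx
    induction i using Fin.lastCases with
    | last => rw [e2]; simp [hY₁, hR', hX']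
    | cast j =>
      have := e3 j
      simp only [_root_.sub_apply, hR, hR'] at this
      simp [hY₁, hX', hY']
      linear_combination -this
  refine ⟨L ∪ L', hL', isom X₁ Y₁ ∘ₗ
    (LinearEquiv.ofBijective (isom Z W) hZW.isom_bijective).symm.toLinearMap, fun v => ?_,
    fun v x hx => ?_⟩
  all_goals
    obtain ⟨u, rfl⟩ := hZW.isom_bijective.2 v
    have hu : (LinearEquiv.ofBijective (isom Z W) hZW.isom_bijective).symm (isom Z W u) = u :=
      LinearEquiv.symm_apply_apply (LinearEquiv.ofBijective (isom Z W) hZW.isom_bijective) u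
    simp only [LinearMap.comp_apply, LinearEquiv.coe_coe, hu]
  · rw [hnew.hypForm_isom h2, hZW.hypForm_isom h2]
  · simp [isom_apply, hZ₁ x hx, hW₁ x hx]

end Decompositions

/-! ### Polynomials vanishing on linear subspaces -/

section Polynomials

open QuadraticMap
open scoped Classical

variable {k : Type*} [Field k] {n r : ℕ}

/-- The homogeneous polynomial of degree one defined by a functional on `k ^ n`. -/
noncomputable def lin : Dual k (Fin n → k) →ₗ[k] MvPolynomial (Fin n) k where
  toFun l := ∑ i, l (Pi.single i 1) • X i
  map_add' l l' := by simp [add_smul, Finset.sum_add_distrib]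
  map_smul' c l := by simp [Finset.smul_sum, smul_smul]

theorem lin_apply (l : Dual k (Fin n → k)) : lin l = ∑ i, l (Pi.single i 1) • X i := rfl

theorem lin_isHomogeneous (l : Dual k (Fin n → k)) : (lin l).IsHomogeneous 1 := by
  rw [lin_apply]
  refine IsHomogeneous.sum _ _ _ fun i _ => ?_
  rw [smul_eq_C_mul]
  simpa using (isHomogeneous_C (Fin n) (l (Pi.single i 1))).mul (isHomogeneous_X k i)

theorem eval_lin (l : Dual k (Fin n → k)) (x : Fin n → k) : eval x (lin l) = l x := by
  rw [LinearMap.pi_apply_eq_sum_univ l x, lin_apply, map_sum]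
  refine Finset.sum_congr rfl fun i _ => ?_
  rw [smul_eval, eval_X, smul_eq_mul, mul_comm]
  congr 2; funext j; simp [Pi.single_apply, eq_comm]

theorem lin_proj (i : Fin n) : lin (LinearMap.proj i : Dual k (Fin n → k)) = X i := by
  simp [lin_apply, Pi.single_apply]

/-- A polynomial vanishing on a linear subspace lies in the ideal of the linear forms cutting
it out. -/
theorem mem_span_lin [Infinite k] (L : Finset (Dual k (Fin n → k))) (F : MvPolynomial (Fin n) k)
    (hF : ∀ x ∈ cut L, eval x F = 0) : F ∈ Ideal.span (lin '' (L : Set (Dual k (Fin n → k)))) := by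
  set I := Ideal.span (lin '' (L : Set (Dual k (Fin n → k)))) with hI
  obtain ⟨W, hW⟩ := exists_isCompl (cut L)
  set π : (Fin n → k) →ₗ[k] (Fin n → k) := (cut L).subtype ∘ₗ (cut L).projectionOnto W hW
  have hπ : ∀ x, π x ∈ cut L := fun x => ((cut L).projectionOnto W hW x).2
  have hπ' : ∀ x ∈ cut L, π x = x := fun x hx =>
    congrArg Subtype.val (Submodule.projectionOnto_apply_left hW ⟨x, hx⟩)
  -- Substituting the coordinates of the projection to `cut L` does not change residues mod `I`.
  set σ : MvPolynomial (Fin n) k →ₐ[k] MvPolynomial (Fin n) k :=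
    aeval fun i => lin (LinearMap.proj i ∘ₗ π)
  have hσ : σ F = 0 := by
    apply MvPolynomial.funext
    intro x
    rw [map_zero, ← hF _ (hπ x)]
    have : (eval x).comp σ.toRingHom = eval (π x) := by
      apply MvPolynomial.ringHom_ext
      · intro c; simp [σ]
      · intro i; simp [σ, eval_lin]
    exact RingHom.congr_fun this F
  have hmem : ∀ l ∈ Submodule.span k (L : Set (Dual k (Fin n → k))), lin l ∈ I := by
    intro l hl
    have : Submodule.span k (L : Set (Dual k (Fin n → k))) ≤ (I.restrictScalars k).comap lin :=
      Submodule.span_le.2 fun l hl => Ideal.subset_span ⟨l, hl, rfl⟩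
    exact this hl
  have hcoord : ∀ i : Fin n, X i - lin (LinearMap.proj i ∘ₗ π) ∈ I := by
    intro i
    rw [← lin_proj i, ← map_sub]
    apply hmem
    have := mem_span_of_iInf_ker_le_ker (ι := L) (L := fun l => (l : Dual k (Fin n → k)))
      (K := LinearMap.proj i - LinearMap.proj i ∘ₗ π) (by
        intro x hx
        have hxL : x ∈ cut L := mem_cut.2 fun l hl => by
          have := (Submodule.mem_iInf _).1 hx ⟨l, hl⟩
          exact this
        simp [LinearMap.mem_ker, hπ' x hxL])
    simpa using this
  have hcongr : (Ideal.Quotient.mkₐ k I).comp σ = Ideal.Quotient.mkₐ k I := by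
    apply MvPolynomial.algHom_ext
    intro i
    simp only [AlgHom.comp_apply, σ, aeval_X]
    exact ((Ideal.Quotient.mk_eq_mk_iff_sub_mem _ _).2 (hcoord i)).symm
  have := AlgHom.congr_fun hcongr F
  rw [AlgHom.comp_apply, hσ, map_zero] at this
  exact Ideal.Quotient.eq_zero_iff_mem.1 this.symm

/-! ### Quadrics as quadratic forms -/

/-- A homogeneous polynomial of degree two defines a quadratic form. -/
theorem exists_quadraticForm (p : MvPolynomial (Fin n) k) (hp : p.IsHomogeneous 2) :
    ∃ Q : QuadraticForm k (Fin n → k), ∀ x, Q x = eval x p := by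
  have hmon : ∀ d ∈ p.support, ∃ Q : QuadraticForm k (Fin n → k),
      ∀ x, Q x = ∏ i, x i ^ d i := by
    intro d hd
    have hdeg : (Finsupp.toMultiset d).card = 2 := by
      have := hp (mem_support_iff.1 hd)
      rw [Finsupp.card_toMultiset, ← this]
      simp [Finsupp.weight_apply]
      rfl
    obtain ⟨i, j, hij⟩ := Multiset.card_eq_two.1 hdeg
    have hd' : d = Finsupp.single i 1 + Finsupp.single j 1 := by
      apply Multiset.toFinsupp.symm.injective
      change Finsupp.toMultiset d = Finsupp.toMultiset _
      rw [hij]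
      simp [Finsupp.toMultiset_add, Finsupp.toMultiset_single]
    refine ⟨linMulLin (LinearMap.proj i) (LinearMap.proj j), fun x => ?_⟩
    rw [hd']
    rw [linMulLin_apply]
    simp only [Finsupp.add_apply, pow_add, Finset.prod_mul_distrib, Finsupp.single_apply,
      Finset.prod_pow_boole, Finset.mem_univ, if_true, LinearMap.proj_apply]
  choose! Q hQ using hmon
  refine ⟨∑ d ∈ p.support, p.coeff d • Q d, fun x => ?_⟩
  rw [eval_eq', _root_.sum_apply]
  exact Finset.sum_congr rfl fun d hd => by rw [_root_.smul_apply, hQ d hd, smul_eq_mul]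

/-! ### Numerical bounds -/

theorem three_mul_bd (s : ℕ) : 3 * bd s = s ^ 3 + 2 * s := by
  induction s with
  | zero => simp [bd]
  | succ s ih => rw [bd, mul_add, ih]; ring

/-- The bounds of the theorem suffice for the linear forms spent in the argument. -/
theorem numerics (s : ℕ) :
    (s - 1) * (2 * s + 1) + bd (s + 1) ≤ s * 2 ^ (s + 1) + (s + 1) * 2 ^ s ∧
    3 * s ^ 2 + 3 * s + 1 + bd s ≤ s * 2 ^ (s + 1) + (s + 1) * 2 ^ s ∧
    3 * s ^ 2 + 3 * s + 1 + (if s ≤ 1 then 0 else s ^ 2) ≤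
      s * (2 ^ (s + 1) - 1) + (s + 1) * 2 ^ s := by
  rcases Nat.lt_or_ge s 4 with hs | hs
  · interval_cases s <;> simp [bd]
  · have h1 : s ^ 2 ≤ 2 ^ s := by
      induction s, hs using Nat.le_induction with
      | base => norm_num
      | succ m hm ih => rw [pow_succ 2 m]; nlinarith
    obtain ⟨t, rfl⟩ := Nat.exists_eq_add_of_le hs
    have h3 := three_mul_bd (4 + t)
    have h4 := three_mul_bd (4 + t + 1)
    rw [if_neg (by omega), pow_succ 2 (4 + t)]
    generalize 2 ^ (4 + t) = P at *
    generalize bd (4 + t) = b at *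
    generalize bd (4 + t + 1) = b' at *
    have h5 : (4 + t) * (4 + t) ^ 2 ≤ (4 + t) * P := Nat.mul_le_mul_left _ h1
    have h6 : 4 + t - 1 = 3 + t := by omega
    have hP : 0 < P := by nlinarith
    obtain ⟨M, rfl⟩ : ∃ M, P = M + 1 := ⟨P - 1, by omega⟩
    have h7 : (M + 1) * 2 - 1 = 2 * M + 1 := by omega
    rw [h6, h7]
    refine ⟨?_, ?_, ?_⟩
    · nlinarith [sq_nonneg t, pow_nonneg (Nat.zero_le t) 3]
    · nlinarith [sq_nonneg t, pow_nonneg (Nat.zero_le t) 3]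
    · nlinarith [sq_nonneg t, pow_nonneg (Nat.zero_le t) 3]

/-! ### Slice rank -/

theorem qf_eq_eval {q q' : Fin r → MvPolynomial (Fin n) k}
    {Q Q' : Fin r → QuadraticForm k (Fin n → k)} (hQ : ∀ i x, Q i x = eval x (q i))
    (hQ' : ∀ i x, Q' i x = eval x (q' i)) (v : Fin r ⊕ Fin r → k) (x : Fin n → k) :
    qf Q Q' v x = eval x (phiMap q q' v) := by
  simp [qf_apply, phiMap, hQ, hQ', smul_eval]

/-- The members of a finite set `L` of functionals as linear forms, indexed by `Fin L.card`. -/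
noncomputable def forms (L : Finset (Dual k (Fin n → k))) (i : Fin L.card) :
    MvPolynomial (Fin n) k := lin (L.equivFin.symm i)

theorem range_forms (L : Finset (Dual k (Fin n → k))) :
    Set.range (forms L) = lin '' (L : Set (Dual k (Fin n → k))) := by
  ext f
  constructor
  · rintro ⟨i, rfl⟩
    exact ⟨_, (L.equivFin.symm i).2, rfl⟩
  · rintro ⟨l, hl, rfl⟩
    exact ⟨L.equivFin ⟨l, hl⟩, by simp [forms]⟩

theorem SliceRankLE.of_vanish [Infinite k] {f : MvPolynomial (Fin n) k} {N : ℕ}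
    (L : Finset (Dual k (Fin n → k))) (hL : L.card ≤ N) (hf : ∀ x ∈ cut L, eval x f = 0) :
    SliceRankLE f N := by
  refine ⟨fun i => if h : i.1 < L.card then forms L ⟨i, h⟩ else 0, fun i => ?_, ?_⟩
  · dsimp only
    split_ifs
    · exact lin_isHomogeneous _
    · exact isHomogeneous_zero _ _ _
  · have := mem_span_lin L f hf
    rw [← range_forms] at this
    refine Ideal.span_mono ?_ this
    rintro _ ⟨i, rfl⟩
    exact ⟨⟨i, i.2.trans_le hL⟩, by simp⟩

theorem isoRich_of_sliceRank [Infinite k] {q q' : Fin r → MvPolynomial (Fin n) k}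
    {Q Q' : Fin r → QuadraticForm k (Fin n → k)} (hQ : ∀ i x, Q i x = eval x (q i))
    (hQ' : ∀ i x, Q' i x = eval x (q' i)) {N : ℕ}
    (hsrk : ∀ a a' : Fin r → k, (∑ i, a i * a' i) = 0 → ¬ (a = 0 ∧ a' = 0) →
      ¬ SliceRankLE (∑ i, (a i • q i + a' i • q' i)) N) : IsoRich Q Q' N := by
  intro u hu h0 L hL
  by_contra! hcon
  refine hsrk (fun i => u (Sum.inl i)) (fun i => u (Sum.inr i)) h0 (fun h => hu ?_)
    (SliceRankLE.of_vanish L hL fun x hx => ?_)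
  · ext (i | i)
    · exact congrFun h.1 i
    · exact congrFun h.2 i
  · rw [← hcon x hx, qf_eq_eval hQ hQ', phiMap, Finset.sum_add_distrib]

end Polynomials

end QuadDecomp

/-- Suppose `∑ qᵢq'ᵢ = ∑ pᵢp'ᵢ` for quadrics over an algebraically closed field of
characteristic ≠ 2, and every combination `∑(aᵢqᵢ + a'ᵢq'ᵢ)` with `∑ aᵢa'ᵢ = 0` and
`(a, a') ≠ 0` has slice rank at least `(r−1)·2^r + r·2^{r−1} + 1`.  Then there is a
space `L` of at most `(r−1)(2^r−1) + r·2^{r−1}` linear forms and a linear `A` on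
`k^{2r}` preserving the hyperbolic form `∑ xᵢyᵢ`, such that `pᵢ ≡ φ(A eᵢ)` and
`p'ᵢ ≡ φ(A fᵢ)` mod `(L)`, where `φ` sends the standard basis to `(q, q')`. -/
theorem quad_decomposition_uniqueness {k : Type*} [Field k] [IsAlgClosed k]
    (hchar : ringChar k ≠ 2) {n r : ℕ}
    (q q' p p' : Fin r → MvPolynomial (Fin n) k)
    (hq : ∀ i, (q i).IsHomogeneous 2) (hq' : ∀ i, (q' i).IsHomogeneous 2)
    (hp : ∀ i, (p i).IsHomogeneous 2) (hp' : ∀ i, (p' i).IsHomogeneous 2)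
    (heq : (∑ i, q i * q' i) = ∑ i, p i * p' i)
    (hsrk : ∀ a a' : Fin r → k, (∑ i, a i * a' i) = 0 → ¬ (a = 0 ∧ a' = 0) →
      ¬ SliceRankLE (∑ i, (a i • q i + a' i • q' i)) ((r - 1) * 2 ^ r + r * 2 ^ (r - 1))) :
    ∃ d ≤ (r - 1) * (2 ^ r - 1) + r * 2 ^ (r - 1),
      ∃ L : Fin d → MvPolynomial (Fin n) k, (∀ i, (L i).IsHomogeneous 1) ∧
        ∃ A : (Fin r ⊕ Fin r → k) →ₗ[k] (Fin r ⊕ Fin r → k),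
          (∀ v, hypForm (A v) = hypForm v) ∧
          ∀ i : Fin r,
            p i - phiMap q q' (A (Pi.single (Sum.inl i) 1)) ∈ Ideal.span (Set.range L) ∧
            p' i - phiMap q q' (A (Pi.single (Sum.inr i) 1)) ∈ Ideal.span (Set.range L) := by
  classical
  have h2 : (2 : k) ≠ 0 := Ring.two_ne_zero hchar
  have : Infinite k := IsAlgClosed.instInfinite
  rcases r with _ | s
  · exact ⟨0, Nat.zero_le _, Fin.elim0, fun i => i.elim0, LinearMap.id, fun _ => rfl,
      fun i => i.elim0⟩
  choose Q hQ using fun i => QuadDecomp.exists_quadraticForm (q i) (hq i)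
  choose Q' hQ' using fun i => QuadDecomp.exists_quadraticForm (q' i) (hq' i)
  choose P hP using fun i => QuadDecomp.exists_quadraticForm (p i) (hp i)
  choose P' hP' using fun i => QuadDecomp.exists_quadraticForm (p' i) (hp' i)
  simp only [Nat.add_sub_cancel] at hsrk ⊢
  obtain ⟨hN, hN', hd⟩ := QuadDecomp.numerics s
  obtain ⟨L, hL, A, hA, hAp⟩ := (QuadDecomp.isoRich_of_sliceRank hQ hQ' hsrk).uniqueness h2
    (p := P) (p' := P') (fun x => by
      have := congrArg (eval x) heq
      simpa [hQ, hQ', hP, hP'] using this) hN hN'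
  have key : ∀ v, phiMap p p' v - phiMap q q' (A v) ∈
      Ideal.span (Set.range (QuadDecomp.forms L)) := by
    intro v
    rw [QuadDecomp.range_forms]
    refine QuadDecomp.mem_span_lin L _ fun x hx => ?_
    rw [map_sub, ← QuadDecomp.qf_eq_eval hP hP', ← QuadDecomp.qf_eq_eval hQ hQ', hAp v x hx,
      sub_self]
  refine ⟨L.card, hL.trans hd, QuadDecomp.forms L, fun i => QuadDecomp.lin_isHomogeneous _, A, hA,
    fun i => ⟨?_, ?_⟩⟩
  · simpa [phiMap, Pi.single_apply] using key (Pi.single (Sum.inl i) 1)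
  · simpa [phiMap, Pi.single_apply] using key (Pi.single (Sum.inr i) 1)
end

section
/- Let E/k' be a finite Galois extension with group H, char(k') ≠ 2, and q a quadric over E such that for each σ ∈ H, σ(q) ≡ q mod (L_σ) for some subspace of linear forms L_σ of dimension at most m. Then rk_E(σ(q) − q) ≤ 2m for all σ ∈ H, and consequently (by the almost-invariant quadratic form theorem) there exists a quadric q_0 defined over k' with rk_E(q − q_0) ≤ 4m(2 + (2m+1)^{2m+1}). -/
/-! A quadric `q` is handled through its symmetric matrix `A`. A product of a polynomial with a
linear form has an associated matrix of rank at most `2`, which gives the bound `2m` for the rank of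
`σ(A) - A`.

The existence of `q₀` is a Galois-equivariant almost-invariance argument. With `r = 2m`, the graphs
`Γ_σ ⊆ E^n × E^n` of the matrices `σ(A)` have pairwise relative dimension
`dim Γ_σ / (Γ_σ ∩ Γ_τ) = rk (σ(A) - τ(A)) ≤ r`. Following the Schlichting-Bergman-Lenstra-Wagner
method, look at intersections `N` of at most `k` of the graphs and at `max_σ dim N / (N ∩ Γ_σ)`.
Let `m'` be the smallest value attained; a pigeonhole (`exists_stable_level`) provides
`k ≤ (r+2)^r` such that `m'` is not improved by allowing `(r+2)k` graphs. Call the `N` attaining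
the bound strong, and let `M` be the sum of all of them. Any `r+2` strong intersections have the
same image modulo some `Γ_σ` as their common intersection, which forces `dim M / (M ∩ Γ_τ) ≤ r`
(`relDim_strongSup_le`), while `M` contains a strong `N`, of codimension at most `k r` in some
graph. Being canonical, `M` is Galois-stable, hence spanned by rational vectors
(`mem_span_rational`). A rational matrix `A₀` whose graph follows `M`
(`exists_rational_matrix`) then satisfies `rk (A - A₀) ≤ r + (r+2)^r r`, and symmetrizing `A₀` at
most doubles this. The elementary inequality `(r+2)^r ≤ (r+1)^(r+1)` gives the stated bound. -/

open MvPolynomial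

/-! ### Almost invariant families of subspaces -/

section Lattice

open Module

variable {K V : Type*} [Field K] [AddCommGroup V] [Module K V]

/-- The relative dimension `dim X / (X ∩ H)`, encoded as the dimension of the image of `X` in
`V ⧸ H`, which makes it visibly monotone in `X`. -/
noncomputable def relDim (H X : Submodule K V) : ℕ := finrank K (X.map H.mkQ)

/-- Semilinear bijections preserve dimension. -/
lemma finrank_eq_of_semilinear {σ : K ≃+* K} (φ : V ≃+ V)
    (hφ : ∀ (c : K) v, φ (c • v) = σ c • φ v) {X Y : Submodule K V}
    (h : ∀ v, φ v ∈ Y ↔ v ∈ X) : finrank K X = finrank K Y := by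
  let e : X ≃+ Y :=
    { toFun := fun x => ⟨φ x, (h x).2 x.2⟩
      invFun := fun y => ⟨φ.symm y, (h _).1 (by simp)⟩
      left_inv := fun x => by simp
      right_inv := fun y => by simp
      map_add' := fun x y => by ext; simp }
  have := rank_eq_of_equiv_equiv (R := K) (R' := K) σ e σ.bijective
    (fun c x => Subtype.ext (hφ c x))
  simp only [finrank, this]

/-- A finite set of indices is strong when it has at most `k` elements and the intersection of
the corresponding `Γ j` has relative dimension at most `m` over every member of the family. -/
def IsStrong {ι : Type*} (Γ : ι → Submodule K V) (k m : ℕ) (s : Finset ι) : Prop :=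
  s.Nonempty ∧ s.card ≤ k ∧ ∀ j, relDim (Γ j) (s.inf Γ) ≤ m

/-- The sum of all intersections of `Γ` over strong sets of indices. It depends on the family
only up to reindexing, hence inherits its symmetries. -/
def strongSup {ι : Type*} (Γ : ι → Submodule K V) (k m : ℕ) : Submodule K V :=
  ⨆ s ∈ {s | IsStrong Γ k m s}, s.inf Γ

/-- Pigeonhole on `m`: there are `k, m` such that strong sets exist, but for no smaller `m'` do
strong sets exist, even when `(r + 2) * k` members may be intersected. -/
lemma exists_stable_level {ι : Type*} [Nonempty ι] (Γ : ι → Submodule K V) (r : ℕ)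
    (hr : ∀ i j, relDim (Γ i) (Γ j) ≤ r) :
    ∃ k m, k ≤ (r + 2) ^ r ∧ (∃ s, IsStrong Γ k m s) ∧
      ∀ m' < m, ∀ s, ¬ IsStrong Γ ((r + 2) * k) m' s := by
  classical
  have hex : ∃ m, m ≤ r ∧ ∃ s, IsStrong Γ ((r + 2) ^ (r - m)) m s := by
    obtain ⟨i⟩ := ‹Nonempty ι›
    exact ⟨r, le_rfl, {i}, by simp, by simp, fun j => by simpa using hr j i⟩
  obtain ⟨hm, s, hs⟩ := Nat.find_spec hex
  refine ⟨(r + 2) ^ (r - Nat.find hex), Nat.find hex,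
    Nat.pow_le_pow_right (by omega) (by omega), ⟨s, hs⟩, ?_⟩
  intro m' hm' t ht
  refine Nat.find_min hex hm' ⟨by omega, t, ht.1, ht.2.1.trans ?_, ht.2.2⟩
  rw [← pow_succ']
  exact Nat.pow_le_pow_right (by omega) (by omega)

lemma relDim_sup (H X : Submodule K V) : relDim H (X ⊔ H) = relDim H X := by
  rw [relDim, relDim, Submodule.map_sup, Submodule.mkQ_map_self, sup_bot_eq]

variable [FiniteDimensional K V]

lemma finrank_map_add_inf {W : Type*} [AddCommGroup W] [Module K W] (f : V →ₗ[K] W)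
    (X : Submodule K V) :
    finrank K (X.map f) + finrank K ↥(X ⊓ LinearMap.ker f) = finrank K X := by
  have h := LinearMap.finrank_range_add_finrank_ker (f.domRestrict X)
  rw [LinearMap.range_domRestrict] at h
  rw [← h, LinearMap.ker_domRestrict, ← Submodule.finrank_map_subtype_eq X,
    Submodule.map_comap_subtype]

lemma relDim_add (H X : Submodule K V) :
    relDim H X + finrank K ↥(X ⊓ H) = finrank K X := by
  have h := finrank_map_add_inf H.mkQ X
  rwa [Submodule.ker_mkQ] at h

lemma relDim_ker {W : Type*} [AddCommGroup W] [Module K W] (f : V →ₗ[K] W)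
    (X : Submodule K V) : relDim (LinearMap.ker f) X = finrank K (X.map f) := by
  have h1 := finrank_map_add_inf f X
  have h2 := relDim_add (LinearMap.ker f) X
  omega

lemma relDim_mono (H : Submodule K V) {X Y : Submodule K V} (h : X ≤ Y) :
    relDim H X ≤ relDim H Y :=
  Submodule.finrank_mono (Submodule.map_mono h)

lemma le_sup_of_relDim_le (H : Submodule K V) {X Y : Submodule K V} (h : X ≤ Y)
    (hd : relDim H Y ≤ relDim H X) : Y ≤ X ⊔ H := by
  have e := Submodule.eq_of_le_of_finrank_le (Submodule.map_mono (f := H.mkQ) h) hd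
  have : Y ≤ (Y.map H.mkQ).comap H.mkQ := Submodule.le_comap_map _ _
  rwa [← e, Submodule.comap_map_mkQ, sup_comm] at this

/-- A supremum of dimension at least `d` already contains a supremum of at most `d` members
having dimension at least `d`. -/
lemma exists_finset_le_finrank_iSup {ι : Type*} (S : Set ι) (X : ι → Submodule K V) (d : ℕ)
    (h : d ≤ finrank K ↥(⨆ i ∈ S, X i)) :
    ∃ T : Finset ι, ↑T ⊆ S ∧ T.card ≤ d ∧ d ≤ finrank K ↥(⨆ i ∈ T, X i) := by
  classical
  induction d with
  | zero => exact ⟨∅, by simp, by simp, by simp⟩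
  | succ d ih =>
    obtain ⟨T, hTS, hTc, hT⟩ := ih (by omega)
    by_cases hd : d + 1 ≤ finrank K ↥(⨆ i ∈ T, X i)
    · exact ⟨T, hTS, by omega, hd⟩
    have : ∃ i ∈ S, ¬ X i ≤ ⨆ i ∈ T, X i := by
      by_contra! hc
      exact hd (h.trans (Submodule.finrank_mono (iSup₂_le hc)))
    obtain ⟨i, hiS, hi⟩ := this
    refine ⟨insert i T, ?_, (Finset.card_insert_le _ _).trans (by omega), ?_⟩
    · rw [Finset.coe_insert]
      exact Set.insert_subset hiS hTS
    · have hlt : (⨆ i ∈ T, X i) < ⨆ j ∈ insert i T, X j := by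
        rw [Finset.iSup_insert]
        exact right_lt_sup.2 hi
      have := Submodule.finrank_lt_finrank_of_lt hlt
      omega

/-- At a stable level, the sum of all strong intersections is almost contained in `Γ i` for each
`i` belonging to a strong set. Finitely many strong intersections and their common intersection
have the same image modulo a suitable `Γ j`; this is what keeps their sum small. -/
lemma relDim_strongSup_le {ι : Type*} (Γ : ι → Submodule K V) {r k m : ℕ}
    (hr : ∀ i j, relDim (Γ i) (Γ j) ≤ r)
    (hmin : ∀ m' < m, ∀ s, ¬ IsStrong Γ ((r + 2) * k) m' s)
    {s : Finset ι} (hs : IsStrong Γ k m s) {i : ι} (hi : i ∈ s) :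
    relDim (Γ i) (strongSup Γ k m) ≤ r := by
  classical
  by_contra! hlt
  have hmap : (strongSup Γ k m).map (Γ i).mkQ =
      ⨆ t ∈ {t | IsStrong Γ k m t}, (t.inf Γ).map (Γ i).mkQ := by
    simp only [strongSup, Submodule.map_iSup]
  obtain ⟨T, hTS, hTc, hT⟩ := exists_finset_le_finrank_iSup {t | IsStrong Γ k m t}
    (fun t => (t.inf Γ).map (Γ i).mkQ) (r + 1) (by rw [← hmap]; exact hlt)
  set u : Finset ι := s ∪ T.biUnion id with hu
  have hsu : s ⊆ u := Finset.subset_union_left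
  have hcard : u.card ≤ (r + 2) * k := by
    have h1 : (T.biUnion id).card ≤ T.card * k :=
      Finset.card_biUnion_le_card_mul _ _ _ fun t ht => (hTS ht).2.1
    have h2 := Finset.card_union_le s (T.biUnion id)
    have h3 : T.card * k ≤ (r + 1) * k := Nat.mul_le_mul_right _ hTc
    have h4 := hs.2.1
    rw [← hu] at h2
    linarith
  -- Stability provides one `Γ j` modulo which the common intersection still has dimension `m`.
  obtain ⟨j, hj⟩ : ∃ j, m ≤ relDim (Γ j) (u.inf Γ) := by
    by_contra! hc
    have hm : 0 < m := (Nat.zero_le _).trans_lt (hc i)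
    exact hmin (m - 1) (by omega) u
      ⟨hs.1.mono hsu, hcard, fun j => by have := hc j; omega⟩
  have hle : (⨆ t ∈ T, t.inf Γ) ≤ Γ j ⊔ Γ i := by
    refine iSup₂_le fun t ht => ?_
    have htu : t ⊆ u := fun x hx =>
      Finset.mem_union_right _ (Finset.mem_biUnion.2 ⟨t, ht, hx⟩)
    have h1 := le_sup_of_relDim_le (Γ j) (Finset.inf_mono htu)
      (((hTS ht).2.2 j).trans hj)
    have h2 : u.inf Γ ≤ Γ i := Finset.inf_le (hsu hi)
    exact h1.trans (sup_le (h2.trans le_sup_right) le_sup_left)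
  have h3 := (relDim_mono (Γ i) hle).trans ((relDim_sup _ _).trans_le (hr i j))
  have h4 : relDim (Γ i) (⨆ t ∈ T, t.inf Γ) =
      finrank K ↥(⨆ t ∈ T, (t.inf Γ).map (Γ i).mkQ) := by
    have e : (⨆ t ∈ T, t.inf Γ).map (Γ i).mkQ = ⨆ t ∈ T, (t.inf Γ).map (Γ i).mkQ := by
      simp only [Submodule.map_iSup]
    rw [relDim, e]
  omega

lemma finrank_le_inf_add {ι : Type*} (Γ : ι → Submodule K V) {r : ℕ}
    (hr : ∀ i j, relDim (Γ i) (Γ j) ≤ r) (i : ι) (s : Finset ι) :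
    finrank K (Γ i) ≤ finrank K ↥(Γ i ⊓ s.inf Γ) + s.card * r := by
  classical
  induction s using Finset.induction_on with
  | empty => rw [Finset.inf_empty, inf_top_eq]; omega
  | insert j s hj ih =>
    have h1 := relDim_add (Γ j) (Γ i ⊓ s.inf Γ)
    have h2 := (relDim_mono (Γ j) (inf_le_left : Γ i ⊓ s.inf Γ ≤ Γ i)).trans (hr j i)
    have e : Γ i ⊓ (insert j s).inf Γ = Γ i ⊓ s.inf Γ ⊓ Γ j := by
      rw [Finset.inf_insert, inf_assoc, inf_comm (Γ j)]
    rw [e, Finset.card_insert_of_notMem hj, add_mul]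
    omega

lemma semilinear_mem_strongSup {ι : Type*} (Γ : ι → Submodule K V) (k m : ℕ)
    {σ : K ≃+* K} (φ : V ≃+ V) (hφ : ∀ (c : K) v, φ (c • v) = σ c • φ v)
    (e : Equiv.Perm ι) (he : ∀ i v, φ v ∈ Γ (e i) ↔ v ∈ Γ i) {v : V}
    (hv : v ∈ strongSup Γ k m) : φ v ∈ strongSup Γ k m := by
  classical
  let P : Submodule K V :=
    { carrier := {v | φ v ∈ strongSup Γ k m}
      add_mem' := fun {a b} ha hb => by
        simp only [Set.mem_ofPred_eq, map_add] at *
        exact add_mem ha hb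
      zero_mem' := by simp
      smul_mem' := fun c x hx => by
        simp only [Set.mem_ofPred_eq, hφ] at *
        exact Submodule.smul_mem _ _ hx }
  suffices strongSup Γ k m ≤ P from this hv
  refine iSup₂_le fun s hs x hx => ?_
  have hinf : ∀ (s : Finset ι) (v : V), φ v ∈ (s.map e.toEmbedding).inf Γ ↔ v ∈ s.inf Γ := by
    intro s v
    simp only [Submodule.mem_finsetInf, Finset.forall_mem_map, Equiv.coe_toEmbedding, he]
  have hstrong : IsStrong Γ k m (s.map e.toEmbedding) := by
    refine ⟨by simpa using hs.1, by simpa using hs.2.1, fun j => ?_⟩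
    obtain ⟨j, rfl⟩ := e.surjective j
    have h1 := finrank_eq_of_semilinear φ hφ (hinf s)
    have h2 := finrank_eq_of_semilinear φ hφ (X := s.inf Γ ⊓ Γ j)
      (Y := (s.map e.toEmbedding).inf Γ ⊓ Γ (e j))
      (fun v => by simp only [Submodule.mem_inf, hinf, he])
    have h3 := relDim_add (Γ j) (s.inf Γ)
    have h4 := relDim_add (Γ (e j)) ((s.map e.toEmbedding).inf Γ)
    have h5 := hs.2.2 j
    omega
  exact (le_iSup₂_of_le (f := fun s (_ : s ∈ {s | IsStrong Γ k m s}) => s.inf Γ)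
    _ hstrong le_rfl : _ ≤ strongSup Γ k m) ((hinf s x).2 hx)

end Lattice

/-! ### Descent of almost Galois-invariant matrices -/

section Descent

open Module

variable {k E : Type*} [Field k] [Field E] [Algebra k E]

/-- The linear map `(x₁, x₂) ↦ x₂ - A x₁`, whose kernel is the graph of `A`. -/
noncomputable def graphDefect {n : ℕ} (A : Matrix (Fin n) (Fin n) E) :
    (Fin n ⊕ Fin n → E) →ₗ[E] (Fin n → E) :=
  LinearMap.funLeft E E Sum.inr - A.mulVecLin ∘ₗ LinearMap.funLeft E E Sum.inl

lemma graphDefect_apply {n : ℕ} (A : Matrix (Fin n) (Fin n) E) (x : Fin n ⊕ Fin n → E) :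
    graphDefect A x = (fun i => x (Sum.inr i)) - A.mulVec fun i => x (Sum.inl i) := rfl

/-- The map `w ↦ (0, w)`. -/
def inrMap (E : Type*) [Field E] (n : ℕ) : (Fin n → E) →ₗ[E] (Fin n ⊕ Fin n → E) where
  toFun w := Sum.elim 0 w
  map_add' x y := by ext (i | i) <;> simp
  map_smul' c x := by ext (i | i) <;> simp

lemma map_graph {n : ℕ} (A B : Matrix (Fin n) (Fin n) E) :
    (LinearMap.ker (graphDefect A)).map (graphDefect B) = LinearMap.range (A - B).mulVecLin := by
  ext w
  simp only [Submodule.mem_map, LinearMap.mem_ker, LinearMap.mem_range, graphDefect_apply,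
    Matrix.mulVecLin_apply, Matrix.sub_mulVec]
  constructor
  · rintro ⟨x, hx, rfl⟩
    exact ⟨_, by rw [← sub_eq_zero.1 hx]⟩
  · rintro ⟨v, rfl⟩
    exact ⟨Sum.elim v (A.mulVec v), by simp, by simp⟩

lemma relDim_graph {n : ℕ} (A B : Matrix (Fin n) (Fin n) E) :
    relDim (LinearMap.ker (graphDefect B)) (LinearMap.ker (graphDefect A)) = (A - B).rank := by
  rw [relDim_ker, map_graph, Matrix.rank]

/-- Coordinatewise action of an automorphism. -/
def coordEquiv (ι : Type*) (σ : E ≃ₐ[k] E) : (ι → E) ≃+ (ι → E) :=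
  AddEquiv.piCongrRight fun _ => σ.toRingEquiv.toAddEquiv

lemma coordEquiv_apply {ι : Type*} (σ : E ≃ₐ[k] E) (x : ι → E) :
    coordEquiv ι σ x = fun i => σ (x i) := rfl

lemma coordEquiv_smul {ι : Type*} (σ : E ≃ₐ[k] E) (c : E) (x : ι → E) :
    coordEquiv ι σ (c • x) = (σ.toRingEquiv c) • coordEquiv ι σ x := by
  ext i
  simp [coordEquiv_apply]

lemma coordEquiv_mulVec {n : ℕ} (σ : E ≃ₐ[k] E) (A : Matrix (Fin n) (Fin n) E) (x : Fin n → E) :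
    coordEquiv _ σ (A.mulVec x) = (A.map σ).mulVec (coordEquiv _ σ x) := by
  ext i
  exact RingHom.map_mulVec (σ : E →+* E) A x i

lemma rank_map_aut {n : ℕ} (σ : E ≃ₐ[k] E) (A : Matrix (Fin n) (Fin n) E) :
    (A.map σ).rank = A.rank := by
  refine (finrank_eq_of_semilinear (coordEquiv _ σ) (coordEquiv_smul σ) fun v => ?_).symm
  simp only [LinearMap.mem_range, Matrix.mulVecLin_apply]
  constructor
  · rintro ⟨y, hy⟩
    obtain ⟨y, rfl⟩ := (coordEquiv _ σ).surjective y
    rw [← coordEquiv_mulVec] at hy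
    exact ⟨y, (coordEquiv _ σ).injective hy⟩
  · rintro ⟨y, rfl⟩
    exact ⟨_, (coordEquiv_mulVec σ A y).symm⟩

lemma coordEquiv_mem_graph {n : ℕ} (σ : E ≃ₐ[k] E) (A : Matrix (Fin n) (Fin n) E)
    (x : Fin n ⊕ Fin n → E) :
    coordEquiv _ σ x ∈ LinearMap.ker (graphDefect (A.map σ)) ↔
      x ∈ LinearMap.ker (graphDefect A) := by
  have : graphDefect (A.map σ) (coordEquiv _ σ x) = coordEquiv _ σ (graphDefect A x) := by
    rw [graphDefect_apply, graphDefect_apply, map_sub, coordEquiv_mulVec]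
    rfl
  rw [LinearMap.mem_ker, LinearMap.mem_ker, this, map_eq_zero_iff _ (coordEquiv _ σ).injective]

/-- For a `k`-rational subspace `M` of `E^n × E^n` there is a matrix `A₀` over `k` with
`(x₁, A₀ x₁) ∈ M` for all `(x₁, x₂) ∈ M`; equivalently `(0, x₂ - A₀ x₁) ∈ M`. -/
lemma exists_rational_matrix {n : ℕ} (M : Submodule E (Fin n ⊕ Fin n → E))
    (hM : ∀ x ∈ M, x ∈ Submodule.span E
      {z | z ∈ M ∧ ∃ y : Fin n ⊕ Fin n → k, z = fun i => algebraMap k E (y i)}) :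
    ∃ A₀ : Matrix (Fin n) (Fin n) k,
      ∀ x ∈ M, inrMap E n (graphDefect (A₀.map (algebraMap k E)) x) ∈ M := by
  let M₀ : Submodule k (Fin n ⊕ Fin n → k) :=
    { carrier := {y | (fun i => algebraMap k E (y i)) ∈ M}
      add_mem' := fun {a b} ha hb => by
        simp only [Set.mem_ofPred_eq, Pi.add_apply, map_add] at *
        exact M.add_mem ha hb
      zero_mem' := by
        simp only [Set.mem_ofPred_eq, Pi.zero_apply, map_zero]
        exact M.zero_mem
      smul_mem' := fun c x hx => by
        simp only [Set.mem_ofPred_eq, Pi.smul_apply, smul_eq_mul, map_mul] at *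
        exact M.smul_mem (algebraMap k E c) hx }
  let p : M₀ →ₗ[k] (Fin n → k) := LinearMap.funLeft k k Sum.inl ∘ₗ M₀.subtype
  obtain ⟨s, hs⟩ := p.rangeRestrict.exists_rightInverse_of_surjective p.range_rangeRestrict
  obtain ⟨g, hg⟩ := LinearMap.exists_extend
    ((LinearMap.funLeft k k Sum.inr ∘ₗ M₀.subtype) ∘ₗ s : _ →ₗ[k] (Fin n → k))
  refine ⟨LinearMap.toMatrix' g, fun x hx => ?_⟩
  have key : Submodule.span E
      {z | z ∈ M ∧ ∃ y : Fin n ⊕ Fin n → k, z = fun i => algebraMap k E (y i)} ≤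
      M.comap (inrMap E n ∘ₗ graphDefect ((LinearMap.toMatrix' g).map (algebraMap k E))) := by
    refine Submodule.span_le.2 ?_
    rintro _ ⟨hz, y, rfl⟩
    let y' : M₀ := ⟨y, hz⟩
    let z : M₀ := s (p.rangeRestrict y')
    have hz1 : ∀ i, (z : Fin n ⊕ Fin n → k) (Sum.inl i) = y (Sum.inl i) := by
      intro i
      have := congrArg Subtype.val (LinearMap.congr_fun hs (p.rangeRestrict y'))
      exact congrFun this i
    have hz2 : ∀ i, (z : Fin n ⊕ Fin n → k) (Sum.inr i) =
        ((LinearMap.toMatrix' g).mulVec fun i => y (Sum.inl i)) i := by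
      intro i
      have := congrFun (LinearMap.congr_fun hg (p.rangeRestrict y')) i
      rw [LinearMap.toMatrix'_mulVec]
      exact this.symm
    have hd := M.sub_mem hz z.2
    refine (congrArg (· ∈ M) ?_).mp hd
    ext (i | i)
    · simp [inrMap, hz1]
    · simp only [inrMap, graphDefect_apply, Pi.sub_apply, LinearMap.coe_comp, Function.comp_apply,
        LinearMap.coe_mk, AddHom.coe_mk, Sum.elim_inr, hz2]
      rw [RingHom.map_mulVec]
      rfl
  exact key (hM x hx)

variable [FiniteDimensional k E] [IsGalois k E]

/-- Galois descent for subspaces of `E^ι`: a Galois-stable subspace is spanned by its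
`k`-rational vectors. A vector `x` is recovered from the traces of its multiples by a dual basis,
and those traces are rational vectors lying in the subspace. -/
lemma mem_span_rational {ι : Type*} (M : Submodule E (ι → E))
    (hM : ∀ (σ : E ≃ₐ[k] E), ∀ x ∈ M, (fun i => σ (x i)) ∈ M) {x : ι → E} (hx : x ∈ M) :
    x ∈ Submodule.span E {z | z ∈ M ∧ ∃ y : ι → k, z = fun i => algebraMap k E (y i)} := by
  classical
  let b := (Module.finBasis k E).traceDual
  let y : Fin (Module.finrank k E) → ι → k :=
    fun j i => Algebra.trace k E (x i * Module.finBasis k E j)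
  have htr : ∀ j, (fun i => algebraMap k E (y j i)) =
      ∑ σ : E ≃ₐ[k] E, σ (Module.finBasis k E j) • fun i => σ (x i) := by
    intro j
    ext i
    simp only [y, trace_eq_sum_automorphisms, map_mul, Finset.sum_apply, Pi.smul_apply,
      smul_eq_mul, mul_comm]
  have hxe : x = ∑ j, b j • fun i => algebraMap k E (y j i) := by
    ext i
    conv_lhs => rw [← b.sum_repr (x i)]
    simp only [b, Module.Basis.traceDual_repr_apply, Algebra.traceForm_apply, Finset.sum_apply,
      Pi.smul_apply, smul_eq_mul, y, Algebra.smul_def (R := k) (A := E), mul_comm]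
  rw [hxe]
  refine Submodule.sum_mem _ fun j _ => Submodule.smul_mem _ _ (Submodule.subset_span ⟨?_, _, rfl⟩)
  rw [htr]
  exact Submodule.sum_mem _ fun σ _ => Submodule.smul_mem _ _ (hM σ x hx)

/-- A matrix over `E` all of whose Galois conjugates differ from it by rank at most `r` is within
rank `r + (r + 2) ^ r * r` of a matrix over `k`. -/
theorem exists_matrix_descent {n r : ℕ} (A : Matrix (Fin n) (Fin n) E)
    (hA : ∀ σ : E ≃ₐ[k] E, (A.map σ - A).rank ≤ r) :
    ∃ A₀ : Matrix (Fin n) (Fin n) k,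
      (A - A₀.map (algebraMap k E)).rank ≤ r + (r + 2) ^ r * r := by
  classical
  let Γ : (E ≃ₐ[k] E) → Submodule E (Fin n ⊕ Fin n → E) :=
    fun σ => LinearMap.ker (graphDefect (A.map σ))
  have hr : ∀ σ τ, relDim (Γ σ) (Γ τ) ≤ r := by
    intro σ τ
    have e : A.map τ - A.map σ = (A.map (σ⁻¹ * τ) - A).map σ := by
      ext i j
      simp
    rw [relDim_graph, e, rank_map_aut]
    exact hA _
  have he : ∀ σ τ v, coordEquiv _ σ v ∈ Γ (Equiv.mulLeft σ τ) ↔ v ∈ Γ τ := by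
    intro σ τ v
    rw [← coordEquiv_mem_graph σ (A.map τ), Matrix.map_map]
    rfl
  obtain ⟨k', m, hk, ⟨s, hs⟩, hmin⟩ := exists_stable_level Γ r hr
  set M := strongSup Γ k' m with hMdef
  have hinv : ∀ (σ : E ≃ₐ[k] E), ∀ x ∈ M, (fun i => σ (x i)) ∈ M := fun σ x hx =>
    semilinear_mem_strongSup Γ k' m (coordEquiv _ σ) (coordEquiv_smul σ) (Equiv.mulLeft σ)
      (he σ) hx
  obtain ⟨σ, hσ⟩ := hs.1
  obtain ⟨A₀, hA₀⟩ := exists_rational_matrix (k := k) M fun x hx => mem_span_rational M hinv hx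
  refine ⟨A₀, ?_⟩
  set D₀ := graphDefect (A₀.map (algebraMap k E)) with hD₀
  have hrank : (A - A₀.map (algebraMap k E)).rank = finrank E ((Γ σ).map D₀) := by
    have e : (A - A₀.map (algebraMap k E)).map σ = A.map σ - A₀.map (algebraMap k E) := by
      ext i j
      simp
    rw [map_graph, ← rank_map_aut σ, Matrix.rank, e]
  -- For `x ∈ M` the vector `(0, D₀ x)` lies in `M`, and `0 × E^n` meets the graph `Γ σ` trivially.
  have h1 : finrank E (M.map D₀) ≤ r := by
    refine le_trans ?_ (relDim_strongSup_le Γ hr hmin hs hσ)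
    rw [relDim_ker]
    refine Submodule.finrank_mono ?_
    rintro _ ⟨x, hx, rfl⟩
    refine ⟨_, hA₀ x hx, ?_⟩
    rw [graphDefect_apply]
    simp only [inrMap, LinearMap.coe_mk, AddHom.coe_mk, Sum.elim_inr, Sum.elim_inl, Pi.zero_apply]
    rw [show (fun _ : Fin n => (0 : E)) = 0 from rfl, Matrix.mulVec_zero, sub_zero]
  have h2 := finrank_le_inf_add Γ hr σ s
  have h3 : s.inf Γ ≤ M := le_iSup₂_of_le (f := fun s (_ : s ∈ {s | IsStrong Γ k' m s}) => s.inf Γ)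
    s hs le_rfl
  have h4 : finrank E ((Γ σ ⊓ s.inf Γ).map D₀) ≤ finrank E (M.map D₀) :=
    Submodule.finrank_mono (Submodule.map_mono (inf_le_right.trans h3))
  have h5 := finrank_map_add_inf D₀ (Γ σ)
  have h6 := finrank_map_add_inf D₀ (Γ σ ⊓ s.inf Γ)
  have h7 : finrank E ↥(Γ σ ⊓ s.inf Γ ⊓ LinearMap.ker D₀) ≤
      finrank E ↥(Γ σ ⊓ LinearMap.ker D₀) :=
    Submodule.finrank_mono (inf_le_inf_right _ inf_le_left)
  have h8 : s.card * r ≤ (r + 2) ^ r * r := Nat.mul_le_mul_right _ (hs.2.1.trans hk)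
  omega

end Descent

/-! ### Quadrics and their matrices -/

section Quadrics

variable {K : Type*} [Field K]

lemma rank_add_le_add {n : ℕ} (A B : Matrix (Fin n) (Fin n) K) :
    (A + B).rank ≤ A.rank + B.rank := by
  rw [Matrix.rank, Matrix.mulVecLin_add]
  refine (Submodule.finrank_mono ?_).trans (Submodule.finrank_add_le_finrank_add_finrank _ _)
  rintro _ ⟨x, rfl⟩
  exact Submodule.add_mem_sup ⟨x, rfl⟩ ⟨x, rfl⟩

lemma rank_smul_le {n : ℕ} (c : K) (A : Matrix (Fin n) (Fin n) K) :
    (c • A).rank ≤ A.rank := by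
  rw [← Matrix.one_mul A, ← Matrix.smul_mul]
  exact (Matrix.rank_mul_le_right _ _).trans (by rw [Matrix.one_mul])

/-- `assocMatrix` as a linear map. -/
noncomputable def assocLin (K : Type*) [Field K] (n : ℕ) :
    MvPolynomial (Fin n) K →ₗ[K] Matrix (Fin n) (Fin n) K where
  toFun := assocMatrix
  map_add' p q := by
    ext i j
    simp only [assocMatrix, coeff_add, Matrix.add_apply]
    split_ifs <;> ring
  map_smul' c p := by
    ext i j
    simp only [assocMatrix, coeff_smul, Matrix.smul_apply, smul_eq_mul, RingHom.id_apply]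
    split_ifs <;> ring

lemma assocLin_apply {n : ℕ} (q : MvPolynomial (Fin n) K) : assocLin K n q = assocMatrix q := rfl

lemma assocMatrix_map {F : Type*} [Field F] (f : K →+* F) {n : ℕ} (q : MvPolynomial (Fin n) K) :
    assocMatrix (MvPolynomial.map f q) = (assocMatrix q).map f := by
  ext i j
  simp only [assocMatrix, coeff_map, Matrix.map_apply]
  split_ifs <;> simp [map_ofNat]

lemma assocMatrix_transpose {n : ℕ} (q : MvPolynomial (Fin n) K) :
    (assocMatrix q).transpose = assocMatrix q := by
  ext i j
  simp only [assocMatrix, Matrix.transpose_apply]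
  by_cases h : i = j
  · simp [h]
  · rw [if_neg h, if_neg (Ne.symm h), add_comm]

/-- The linear coefficients of a polynomial. -/
noncomputable def linCoeff {n : ℕ} (g : MvPolynomial (Fin n) K) : Fin n → K :=
  fun i => g.coeff (Finsupp.single i 1)

/-- The associated matrix of `g * ℓ`, for a linear form `ℓ`, only sees the linear part of `g`. -/
lemma assocMatrix_mul_linear (h2 : (2 : K) ≠ 0) {n : ℕ} (g l : MvPolynomial (Fin n) K)
    (hl : l.IsHomogeneous 1) :
    assocMatrix (g * l) = (2 : K)⁻¹ • (Matrix.vecMulVec (linCoeff g) (linCoeff l) +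
      Matrix.vecMulVec (linCoeff l) (linCoeff g)) := by
  classical
  have hl' : l ∈ Submodule.span K (Set.range (X : Fin n → MvPolynomial (Fin n) K)) := by
    rw [← homogeneousSubmodule_one_eq_span_X]
    exact hl
  clear hl
  induction hl' using Submodule.span_induction with
  | mem x hx =>
    obtain ⟨a, rfl⟩ := hx
    ext i j
    have hX : ∀ i : Fin n, linCoeff (X a : MvPolynomial (Fin n) K) i = if a = i then 1 else 0 := by
      intro i
      simp [linCoeff, coeff_X, Finsupp.single_left_inj]
    simp only [Matrix.smul_apply, Matrix.add_apply, Matrix.vecMulVec_apply, hX, smul_eq_mul,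
      assocMatrix]
    by_cases hij : i = j
    · subst hij
      rw [if_pos rfl, show Finsupp.single i 2 = Finsupp.single i 1 + Finsupp.single i 1 by
        rw [← Finsupp.single_add]]
      by_cases ha : a = i
      · subst ha
        rw [coeff_mul_X, if_pos rfl, linCoeff]
        field_simp
        ring
      · rw [coeff_mul_X', if_neg (by simp [Ne.symm ha])]
        simp [ha]
    · rw [if_neg hij]
      by_cases ha : a = i
      · subst ha
        rw [add_comm, coeff_mul_X, if_pos rfl, if_neg hij]
        simp only [linCoeff]
        ring
      by_cases hb : a = j
      · subst hb
        rw [coeff_mul_X, if_pos rfl, if_neg ha]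
        simp only [linCoeff]
        ring
      · rw [coeff_mul_X', if_neg (by simp [Ne.symm ha, Ne.symm hb])]
        simp [ha, hb]
  | zero =>
    ext i j
    simp [assocMatrix, linCoeff, Matrix.vecMulVec_apply]
  | add x y _ _ hx hy =>
    have e : linCoeff (x + y) = linCoeff x + linCoeff y := by ext i; simp [linCoeff]
    rw [mul_add, ← assocLin_apply, map_add, assocLin_apply, assocLin_apply, hx, hy, e,
      Matrix.vecMulVec_add, Matrix.add_vecMulVec]
    module
  | smul c x _ hx =>
    have e : linCoeff (c • x) = c • linCoeff x := by ext i; simp [linCoeff]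
    rw [mul_smul_comm, ← assocLin_apply, map_smul, assocLin_apply, hx, e,
      Matrix.vecMulVec_smul, Matrix.smul_vecMulVec]
    module

lemma qrank_le_of_mem_span (h2 : (2 : K) ≠ 0) {n d : ℕ} (q : MvPolynomial (Fin n) K)
    (L : Fin d → MvPolynomial (Fin n) K) (hL : ∀ i, (L i).IsHomogeneous 1)
    (hq : q ∈ Ideal.span (Set.range L)) : qrank q ≤ 2 * d := by
  classical
  obtain ⟨g, rfl⟩ := Ideal.mem_span_range_iff_exists_fun.1 hq
  have key : ∀ s : Finset (Fin d), (assocMatrix (∑ i ∈ s, g i * L i)).rank ≤ 2 * s.card := by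
    intro s
    induction s using Finset.induction_on with
    | empty => simp [← assocLin_apply]
    | insert i s hi ih =>
      rw [Finset.sum_insert hi, ← assocLin_apply, map_add, assocLin_apply, assocLin_apply,
        Finset.card_insert_of_notMem hi]
      refine (rank_add_le_add _ _).trans ?_
      have h1 : (assocMatrix (g i * L i)).rank ≤ 1 + 1 := by
        rw [assocMatrix_mul_linear h2 _ _ (hL i)]
        exact (rank_smul_le _ _).trans ((rank_add_le_add _ _).trans
          (add_le_add (Matrix.rank_vecMulVec_le _ _) (Matrix.rank_vecMulVec_le _ _)))
      omega
  simpa [qrank] using key Finset.univ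

/-- Every symmetrized matrix is the associated matrix of a quadric. -/
lemma exists_quadric (h2 : (2 : K) ≠ 0) {n : ℕ} (A : Matrix (Fin n) (Fin n) K) :
    ∃ q : MvPolynomial (Fin n) K, q.IsHomogeneous 2 ∧
      assocMatrix q = (2 : K)⁻¹ • (A + A.transpose) := by
  classical
  refine ⟨∑ i, ∑ j, A i j • (X i * X j), ?_, ?_⟩
  · refine IsHomogeneous.sum _ _ _ fun i _ => IsHomogeneous.sum _ _ _ fun j _ => ?_
    rw [smul_eq_C_mul]
    exact ((isHomogeneous_X K i).mul (isHomogeneous_X K j)).C_mul _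
  · have hX : ∀ i : Fin n, linCoeff (X i : MvPolynomial (Fin n) K) = Pi.single i 1 := by
      intro i
      ext j
      simp [linCoeff, coeff_X, Finsupp.single_left_inj, Pi.single_apply, eq_comm]
    simp only [← assocLin_apply, map_sum, map_smul]
    simp only [assocLin_apply, assocMatrix_mul_linear h2 _ _ (isHomogeneous_X K _), hX]
    ext a b
    simp only [Matrix.sum_apply, Matrix.smul_apply, Matrix.add_apply, Matrix.vecMulVec_apply,
      Matrix.transpose_apply, Pi.single_apply, smul_eq_mul, mul_add, Finset.sum_add_distrib]
    simp [mul_comm]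

end Quadrics

/-- For `r ≥ 2` this follows from `(1 + 1 / (r + 1)) ^ (r + 1) ≤ e < 3`. -/
lemma pow_bound (r : ℕ) : (r + 2) ^ r ≤ (r + 1) ^ (r + 1) := by
  rcases Nat.lt_or_ge r 2 with h | h
  · interval_cases r <;> norm_num
  · have h1 := (Real.one_add_inv_pow_le_exp (n := r + 1)).trans Real.exp_one_lt_three.le
    have hp : (0 : ℝ) < r + 1 := by positivity
    have h2 : (1 + ((r + 1 : ℕ) : ℝ)⁻¹) = (r + 2) / (r + 1) := by
      push_cast
      field_simp
      ring
    rw [h2, div_pow, div_le_iff₀ (by positivity)] at h1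
    have h3 : (3 : ℝ) ≤ r + 2 := by
      have : (2 : ℝ) ≤ r := by exact_mod_cast h
      linarith
    have h4 : ((r : ℝ) + 2) ^ r * (r + 2) ≤ (r + 1) ^ (r + 1) * (r + 2) := by
      rw [← pow_succ, mul_comm _ ((r : ℝ) + 2)]
      exact h1.trans (mul_le_mul_of_nonneg_right h3 (by positivity))
    exact_mod_cast le_of_mul_le_mul_right h4 (by positivity)

/-! ### Descent of quadrics -/

/-- Let `E/k'` be a finite Galois extension with group `H`, `char k' ≠ 2`, and `q` a
quadric over `E` such that for each `σ ∈ H`, `σ(q) ≡ q mod (L_σ)` for some space `L_σ`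
of at most `m` linear forms.  Then `rk_E(σ(q) − q) ≤ 2m` for all `σ ∈ H`, and there is
a quadric `q₀` over `k'` with `rk_E(q − q₀) ≤ 4m(2 + (2m+1)^{2m+1})`. -/
theorem almost_invariant_quadric_descent {k' E : Type*} [Field k'] [Field E]
    [Algebra k' E] [FiniteDimensional k' E] [IsGalois k' E] (hchar : ringChar k' ≠ 2)
    {n m : ℕ} (q : MvPolynomial (Fin n) E) (hq : q.IsHomogeneous 2)
    (hinv : ∀ σ : E ≃ₐ[k'] E, ∃ d ≤ m, ∃ L : Fin d → MvPolynomial (Fin n) E,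
      (∀ i, (L i).IsHomogeneous 1) ∧
        MvPolynomial.map (σ : E →+* E) q - q ∈ Ideal.span (Set.range L)) :
    (∀ σ : E ≃ₐ[k'] E, qrank (MvPolynomial.map (σ : E →+* E) q - q) ≤ 2 * m) ∧
    ∃ q₀ : MvPolynomial (Fin n) k', q₀.IsHomogeneous 2 ∧
      qrank (q - MvPolynomial.map (algebraMap k' E) q₀) ≤
        4 * m * (2 + (2 * m + 1) ^ (2 * m + 1)) := by
  have h2k : (2 : k') ≠ 0 := Ring.two_ne_zero hchar
  have h2 : (2 : E) ≠ 0 := by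
    intro h
    apply h2k
    apply (algebraMap k' E).injective
    rw [map_ofNat, h, map_zero]
  have hrk : ∀ σ : E ≃ₐ[k'] E, qrank (MvPolynomial.map (σ : E →+* E) q - q) ≤ 2 * m := by
    intro σ
    obtain ⟨d, hd, L, hL, hmem⟩ := hinv σ
    exact (qrank_le_of_mem_span h2 _ L hL hmem).trans (by omega)
  refine ⟨hrk, ?_⟩
  obtain ⟨A₀, hA₀⟩ := exists_matrix_descent (k := k') (r := 2 * m) (assocMatrix q) fun σ => by
    have h := hrk σ
    rwa [qrank, ← assocLin_apply, map_sub, assocLin_apply, assocLin_apply, assocMatrix_map] at h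
  obtain ⟨q₀, hq₀, hq₀A⟩ := exists_quadric h2k A₀
  refine ⟨q₀, hq₀, ?_⟩
  set T := assocMatrix q - A₀.map (algebraMap k' E) with hT
  -- The difference is the symmetrization of `T`, since the matrix of `q` is symmetric.
  have e : assocMatrix (q - MvPolynomial.map (algebraMap k' E) q₀) =
      (2 : E)⁻¹ • (T + T.transpose) := by
    rw [← assocLin_apply, map_sub, assocLin_apply, assocLin_apply, assocMatrix_map, hq₀A, hT,
      Matrix.transpose_sub, assocMatrix_transpose]
    ext i j
    simp only [Matrix.sub_apply, Matrix.add_apply, Matrix.smul_apply, Matrix.map_apply,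
      Matrix.transpose_apply, smul_eq_mul, map_mul, map_add, map_inv₀, map_ofNat]
    field_simp
    ring
  have h1 := rank_smul_le (2 : E)⁻¹ (T + T.transpose)
  have h3 := rank_add_le_add T T.transpose
  rw [Matrix.rank_transpose] at h3
  have h4 : (2 * m + 2) ^ (2 * m) * (2 * m) ≤ (2 * m + 1) ^ (2 * m + 1) * (2 * m) :=
    Nat.mul_le_mul_right _ (pow_bound (2 * m))
  rw [qrank, e]
  nlinarith
end
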